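/- arXiv:1609.07670 — 5 statements merged into one kernel-verified Lean document; each statement's English description precedes it below -/
import Mathlib

section
/- For every integer n ≥ 3, r_3(4, 3; P_n) ≥ 2n − 2: there is a red/blue coloring of the 3-element subsets of {1,...,2n−3} that contains no blue ordered copy of the 3-uniform tight path on n vertices and no set of 4 vertices spanning at least 3 red triples. -/
/-!
For the lower bound, split `{1,...,2n-3}` into the pairs `{1,2}, {3,4}, ..., {2n-5,2n-4}` and the
singleton `{2n-3}`, and color a triple red exactly when its two smallest vertices form one of
these pairs. In a 4-set `a < b < c < d`, if `{a,b}` is a pair then only `abc` and `abd` are red,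
and otherwise only `acd` and `bcd` can be red, so at most two triples are red
(`not_hasRedSpread_pairColoring`). Along a blue tight path, consecutive vertices lie in distinct
pairs, except possibly the last two; hence the vertex of index `j ≤ n-2` is at least `2j+1`, the
vertex of index `n-2` is at least `2n-3`, and there is no room for another one
(`not_hasBlueTightPath_pairColoring`).

Because an infimum over an empty set of naturals is `0`, the inequality
`2n-2 ≤ spreadPathRamsey 3 4 3 n` also needs the Ramsey number to be finite. Color a pair `u < v`
by the length (capped at `n`) of the longest blue tight path ending in `u, v`. If there is no long
blue path, a blue triple `u < v < w` makes this color increase strictly from `uv` to `vw`. The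
multicolor Ramsey theorem for graphs gives four vertices on which the pair coloring is constant,
so all triples on them are red (`exists_spread_or_path`).
-/

/-!
Colorings are maps from finite sets of naturals to `Bool`,
with `true` = red and `false` = blue.  All structures live inside
the vertex set `{1, ..., N}`, i.e. `Finset.Icc 1 N`.
-/

/-- A blue ordered copy of the `k`-uniform tight path on `n` vertices inside `{1,...,N}`:
a strictly increasing sequence `x 0 < x 1 < ⋯ < x (n-1)` of elements of `{1,...,N}`
all of whose consecutive `k`-element windows are blue. -/
def HasBlueTightPath (k n N : ℕ) (χ : Finset ℕ → Bool) : Prop :=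
  ∃ x : ℕ → ℕ, StrictMono x ∧ (∀ i < n, x i ∈ Finset.Icc 1 N) ∧
    ∀ j, j + k ≤ n → χ ((Finset.range k).image fun i => x (j + i)) = false

/-- A red copy of the complete `k`-uniform hypergraph on `s` vertices inside `{1,...,N}`:
a set of `s` vertices all of whose `k`-element subsets are red. -/
def HasRedClique (k s N : ℕ) (χ : Finset ℕ → Bool) : Prop :=
  ∃ S : Finset ℕ, S ⊆ Finset.Icc 1 N ∧ S.card = s ∧
    ∀ e ⊆ S, e.card = k → χ e = true

/-- The Ramsey number `r_k(s, P_n)`. -/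
noncomputable def cliquePathRamsey (k s n : ℕ) : ℕ :=
  sInf {N | ∀ χ : Finset ℕ → Bool, HasRedClique k s N χ ∨ HasBlueTightPath k n N χ}

/-- An ordered copy of the path power `P_m^ℓ` in color `c` inside `{1,...,N}`:
a strictly increasing sequence `x 0 < ⋯ < x (m-1)` in `{1,...,N}` with
`χ {x i, x j} = c` whenever `i < j < m` and `j - i ≤ ℓ`. -/
def HasPowPath (ℓ m N : ℕ) (c : Bool) (χ : Finset ℕ → Bool) : Prop :=
  ∃ x : ℕ → ℕ, StrictMono x ∧ (∀ i < m, x i ∈ Finset.Icc 1 N) ∧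
    ∀ i j, i < j → j < m → j - i ≤ ℓ → χ {x i, x j} = c

/-- The ordered Ramsey number `r(P_a^ℓ, P_b^ℓ)`. -/
noncomputable def powPathRamsey (ℓ a b : ℕ) : ℕ :=
  sInf {N | ∀ χ : Finset ℕ → Bool, HasPowPath ℓ a N true χ ∨ HasPowPath ℓ b N false χ}

/-- A set of `s` vertices inside `{1,...,N}` spanning at least `t` red `k`-element subsets. -/
def HasRedSpread (k s t N : ℕ) (χ : Finset ℕ → Bool) : Prop :=
  ∃ S : Finset ℕ, S ⊆ Finset.Icc 1 N ∧ S.card = s ∧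
    t ≤ ((Finset.powersetCard k S).filter fun e => χ e = true).card

/-- The Ramsey number `r_k(s, t; P_n)`. -/
noncomputable def spreadPathRamsey (k s t n : ℕ) : ℕ :=
  sInf {N | ∀ χ : Finset ℕ → Bool, HasRedSpread k s t N χ ∨ HasBlueTightPath k n N χ}

/-- A set `S` of `k+1` vertices inside `{1,...,N}` spanning at least `t` red `k`-element
subsets, one of which consists of the `k` smallest vertices of `S` (i.e. `S` minus its
maximum element `v`). -/
def HasRedInitialSpread (k t N : ℕ) (χ : Finset ℕ → Bool) : Prop :=
  ∃ S : Finset ℕ, S ⊆ Finset.Icc 1 N ∧ S.card = k + 1 ∧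
    (∃ v ∈ S, (∀ u ∈ S, u ≤ v) ∧ χ (S.erase v) = true) ∧
    t ≤ ((Finset.powersetCard k S).filter fun e => χ e = true).card

/-- The Ramsey number `f_k(k+1, t; P_n)`: the minimum `N` such that every coloring of the
`k`-sets of `{1,...,N}` has a blue tight path on `n` vertices or a set of `k+1` vertices
spanning at least `t` red `k`-sets, one of which consists of its `k` smallest vertices. -/
noncomputable def initialSpreadPathRamsey (k t n : ℕ) : ℕ :=
  sInf {N | ∀ χ : Finset ℕ → Bool, HasRedInitialSpread k t N χ ∨ HasBlueTightPath k n N χ}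

/-- A blue ordered copy of the `k`-uniform broom `B_{a,m}` inside `{1,...,N}`:
vertices `v 0 < ⋯ < v (a-1) < w 0 < ⋯ < w (m-1)`, every consecutive `k`-window of the
`v`'s is blue, and (provided `a ≥ k-1`) for each `j` the `k`-set consisting of the last
`k-1` of the `v`'s together with `w j` is blue. -/
def HasBlueBroom (k a m N : ℕ) (χ : Finset ℕ → Bool) : Prop :=
  ∃ v w : ℕ → ℕ, StrictMono v ∧ StrictMono w ∧
    (∀ i < a, v i ∈ Finset.Icc 1 N) ∧ (∀ j < m, w j ∈ Finset.Icc 1 N) ∧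
    (∀ i < a, ∀ j < m, v i < w j) ∧
    (∀ j, j + k ≤ a → χ ((Finset.range k).image fun i => v (j + i)) = false) ∧
    (k - 1 ≤ a → ∀ j < m,
      χ (insert (w j) ((Finset.range (k - 1)).image fun i => v (a - (k - 1) + i))) = false)

/-- The Ramsey number `r_3(4, 3; B_{a,m})` for the `3`-uniform broom. -/
noncomputable def spreadBroomRamsey3 (a m : ℕ) : ℕ :=
  sInf {N | ∀ χ : Finset ℕ → Bool, HasRedSpread 3 4 3 N χ ∨ HasBlueBroom 3 a m N χ}

/-- The tower function: `twr 1 x = x` and `twr (i+1) x = 2 ^ twr i x`. -/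
def twr (i x : ℕ) : ℕ := (fun y => 2 ^ y)^[i - 1] x

/-- The real tower function: `rtwr 1 x = x` and `rtwr (i+1) x = 2 ^ rtwr i x`. -/
noncomputable def rtwr (i : ℕ) (x : ℝ) : ℝ := (fun y => (2 : ℝ) ^ y)^[i - 1] x

lemma exists_sorted_three {e : Finset ℕ} (h : e.card = 3) :
    ∃ a b c, a < b ∧ b < c ∧ e = {a, b, c} := by
  have hm := (e.orderEmbOfFin h).strictMono
  refine ⟨e.orderEmbOfFin h 0, e.orderEmbOfFin h 1, e.orderEmbOfFin h 2, hm (by decide),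
    hm (by decide), ?_⟩
  have := Finset.image_orderEmbOfFin_univ e h
  rw [show (Finset.univ : Finset (Fin 3)) = {0, 1, 2} by decide] at this
  refine this.symm.trans ?_
  simp only [Finset.image_insert, Finset.image_singleton]

lemma exists_sorted_four {e : Finset ℕ} (h : e.card = 4) :
    ∃ a b c d, a < b ∧ b < c ∧ c < d ∧ e = {a, b, c, d} := by
  have hm := (e.orderEmbOfFin h).strictMono
  refine ⟨e.orderEmbOfFin h 0, e.orderEmbOfFin h 1, e.orderEmbOfFin h 2, e.orderEmbOfFin h 3,
    hm (by decide), hm (by decide), hm (by decide), ?_⟩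
  have := Finset.image_orderEmbOfFin_univ e h
  rw [show (Finset.univ : Finset (Fin 4)) = {0, 1, 2, 3} by decide] at this
  refine this.symm.trans ?_
  simp only [Finset.image_insert, Finset.image_singleton]

lemma image_range_three (x : ℕ → ℕ) (j : ℕ) :
    ((Finset.range 3).image fun i => x (j + i)) = {x j, x (j + 1), x (j + 2)} := by
  ext y
  simp [Finset.range_add_one]
  tauto

/-! ### The coloring for the lower bound -/

/-- A set is red when its two smallest elements are `a` and `a + 1` with `a` odd. -/
def pairColoring (e : Finset ℕ) : Bool :=
  decide (∃ a ∈ e, a % 2 = 1 ∧ a + 1 ∈ e ∧ ∀ c ∈ e, a ≤ c)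

lemma pairColoring_triple {a b c : ℕ} (hab : a < b) (hbc : b < c) :
    pairColoring {a, b, c} = true ↔ a % 2 = 1 ∧ b = a + 1 := by
  simp only [pairColoring, decide_eq_true_eq, Finset.mem_insert, Finset.mem_singleton]
  constructor
  · rintro ⟨x, hx, hodd, hx1, hmin⟩
    have := hmin a (by simp)
    omega
  · rintro ⟨h1, h2⟩
    refine ⟨a, by simp, h1, by omega, ?_⟩
    intro c hc
    omega

lemma not_hasBlueTightPath_pairColoring {n : ℕ} (hn : 3 ≤ n) :
    ¬ HasBlueTightPath 3 n (2 * n - 3) pairColoring := by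
  rintro ⟨x, hx, hr, hb⟩
  have key : ∀ j, j + 2 ≤ n → 2 * j + 1 ≤ x j := by
    intro j
    induction j with
    | zero =>
      intro _
      have := hr 0 (by omega)
      rw [Finset.mem_Icc] at this
      omega
    | succ j ih =>
      intro hj
      have h1 := ih (by omega)
      have h2 := hb j (by omega)
      rw [image_range_three] at h2
      have h3 := hx (show j < j + 1 by omega)
      have h4 := hx (show j + 1 < j + 2 by omega)
      have h5 := pairColoring_triple h3 h4
      rw [h2] at h5
      simp only [Bool.false_eq_true, false_iff, not_and] at h5
      omega
  have h1 := key (n - 2) (by omega)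
  have h2 := hx (show n - 2 < n - 1 by omega)
  have h3 := hr (n - 1) (by omega)
  rw [Finset.mem_Icc] at h3
  omega

lemma not_hasRedSpread_pairColoring (N : ℕ) : ¬ HasRedSpread 3 4 3 N pairColoring := by
  rintro ⟨S, -, hS, ht⟩
  obtain ⟨a, b, c, d, hab, hbc, hcd, rfl⟩ := exists_sorted_four hS
  have hsub : ∀ e ∈ Finset.powersetCard 3 ({a, b, c, d} : Finset ℕ),
      e = {a, b, c} ∨ e = {a, b, d} ∨ e = {a, c, d} ∨ e = {b, c, d} := by
    intro e he
    rw [Finset.mem_powersetCard] at he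
    obtain ⟨p, q, r, hpq, hqr, rfl⟩ := exists_sorted_three he.2
    have hp := he.1 (show p ∈ ({p, q, r} : Finset ℕ) by simp)
    have hq := he.1 (show q ∈ ({p, q, r} : Finset ℕ) by simp)
    have hr := he.1 (show r ∈ ({p, q, r} : Finset ℕ) by simp)
    simp only [Finset.mem_insert, Finset.mem_singleton] at hp hq hr
    have : (p = a ∧ q = b ∧ r = c) ∨ (p = a ∧ q = b ∧ r = d) ∨ (p = a ∧ q = c ∧ r = d) ∨
      (p = b ∧ q = c ∧ r = d) := by omega
    rcases this with ⟨rfl, rfl, rfl⟩ | ⟨rfl, rfl, rfl⟩ | ⟨rfl, rfl, rfl⟩ | ⟨rfl, rfl, rfl⟩ <;> simp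
  have two : ∀ s t : Finset ℕ, ¬ ((Finset.powersetCard 3 ({a, b, c, d} : Finset ℕ)).filter
      fun e => pairColoring e = true) ⊆ {s, t} := by
    intro s t h
    have := (Finset.card_le_card h).trans Finset.card_le_two
    omega
  by_cases hp : a % 2 = 1 ∧ b = a + 1
  · apply two {a, b, c} {a, b, d}
    intro e he
    rw [Finset.mem_filter] at he
    simp only [Finset.mem_insert, Finset.mem_singleton]
    rcases hsub e he.1 with rfl | rfl | rfl | rfl
    · simp
    · simp
    · have := (pairColoring_triple (by omega) (by omega)).1 he.2
      omega
    · have := (pairColoring_triple (by omega) (by omega)).1 he.2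
      omega
  · apply two {a, c, d} {b, c, d}
    intro e he
    rw [Finset.mem_filter] at he
    simp only [Finset.mem_insert, Finset.mem_singleton]
    rcases hsub e he.1 with rfl | rfl | rfl | rfl
    · exact absurd ((pairColoring_triple (by omega) (by omega)).1 he.2) hp
    · exact absurd ((pairColoring_triple (by omega) (by omega)).1 he.2) hp
    · simp
    · simp

/-! ### Finiteness of the Ramsey number -/

/-- The first step of the Erdős–Rado argument: every large enough set has an `m`-subset on which
the color of a pair depends only on its smaller element. -/
lemma exists_endHomogeneous (r m : ℕ) : ∃ N, ∀ (h : ℕ → ℕ → ℕ) (A : Finset ℕ),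
    (∀ u ∈ A, ∀ v ∈ A, u < v → h u v < r) → N ≤ A.card →
    ∃ B ⊆ A, B.card = m ∧ ∃ g : ℕ → ℕ, ∀ u ∈ B, ∀ v ∈ B, u < v → h u v = g u := by
  induction m with
  | zero => exact ⟨0, fun h A _ _ => ⟨∅, by simp, by simp, fun _ => 0, by simp⟩⟩
  | succ m ih =>
    obtain ⟨N, hN⟩ := ih
    refine ⟨r * N + 2, fun h A hA hc => ?_⟩
    have hne : A.Nonempty := Finset.card_pos.1 (by omega)
    set a := A.min' hne with ha
    have haA : a ∈ A := A.min'_mem hne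
    have hlt : ∀ v ∈ A.erase a, a < v := fun v hv => A.min'_lt_of_mem_erase_min' hne hv
    have hce : (A.erase a).card = A.card - 1 := Finset.card_erase_of_mem haA
    obtain ⟨y, -, hy⟩ := Finset.exists_lt_card_fiber_of_mul_lt_card_of_maps_to
      (s := A.erase a) (t := Finset.range r) (f := fun v => h a v) (n := N)
      (fun v hv => Finset.mem_range.2 (hA a haA v (Finset.mem_of_mem_erase hv) (hlt v hv)))
      (by rw [Finset.card_range, hce]; omega)
    obtain ⟨B, hBA, hBm, g, hg⟩ := hN h ((A.erase a).filter fun v => h a v = y)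
      (fun u hu v hv => hA u (Finset.mem_of_mem_erase (Finset.mem_filter.1 hu).1) v
        (Finset.mem_of_mem_erase (Finset.mem_filter.1 hv).1)) hy.le
    have hB : ∀ v ∈ B, v ∈ A ∧ a < v ∧ h a v = y := fun v hv => by
      have := Finset.mem_filter.1 (hBA hv)
      exact ⟨Finset.mem_of_mem_erase this.1, hlt v this.1, this.2⟩
    have haB : a ∉ B := fun hh => lt_irrefl _ (hB a hh).2.1
    refine ⟨insert a B, ?_, by rw [Finset.card_insert_of_notMem haB, hBm],
      fun u => if u = a then y else g u, ?_⟩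
    · intro v hv
      rcases Finset.mem_insert.1 hv with rfl | hv
      · exact haA
      · exact (hB v hv).1
    · intro u hu v hv huv
      dsimp only
      rcases Finset.mem_insert.1 hu with hua | hu
      · rw [if_pos hua]
        rcases Finset.mem_insert.1 hv with hva | hv
        · omega
        · rw [hua]
          exact (hB v hv).2.2
      · have hau := (hB u hu).2.1
        rw [if_neg (by omega)]
        rcases Finset.mem_insert.1 hv with hva | hv
        · omega
        · exact hg u hu v hv huv

/-- The `r`-color Ramsey theorem for a monochromatic `K_4`. -/
lemma exists_mono_four (r : ℕ) : ∃ N, ∀ (h : ℕ → ℕ → ℕ) (A : Finset ℕ),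
    (∀ u ∈ A, ∀ v ∈ A, u < v → h u v < r) → N ≤ A.card →
    ∃ S ⊆ A, S.card = 4 ∧ ∃ y, ∀ u ∈ S, ∀ v ∈ S, u < v → h u v = y := by
  -- `3r + 1` vertices would do if every `g u` were below `r`; for the largest vertex `g` is
  -- unconstrained, so that vertex is deleted first.
  obtain ⟨N, hN⟩ := exists_endHomogeneous r (r * 3 + 2)
  refine ⟨N, fun h A hA hc => ?_⟩
  obtain ⟨B, hBA, hBm, g, hg⟩ := hN h A hA hc
  have hne : B.Nonempty := Finset.card_pos.1 (by omega)
  obtain ⟨y, -, hy⟩ := Finset.exists_lt_card_fiber_of_mul_lt_card_of_maps_to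
    (s := B.erase (B.max' hne)) (t := Finset.range r) (f := g) (n := 3)
    (fun v hv => by
      have hvB := Finset.mem_of_mem_erase hv
      have hlt := B.lt_max'_of_mem_erase_max' hne hv
      rw [Finset.mem_range, ← hg v hvB _ (B.max'_mem hne) hlt]
      exact hA v (hBA hvB) _ (hBA (B.max'_mem hne)) hlt)
    (by rw [Finset.card_range, Finset.card_erase_of_mem (B.max'_mem hne)]; omega)
  obtain ⟨S, hS, hS4⟩ := Finset.exists_subset_card_eq (Nat.succ_le_of_lt hy)
  have hSB : ∀ v ∈ S, v ∈ B ∧ g v = y := fun v hv => by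
    have := Finset.mem_filter.1 (hS hv)
    exact ⟨Finset.mem_of_mem_erase this.1, this.2⟩
  exact ⟨S, fun v hv => hBA (hSB v hv).1, hS4, y, fun u hu v hv huv =>
    (hg u (hSB u hu).1 v (hSB v hv).1 huv).trans (hSB u hu).2⟩

/-- There is a blue tight path on `l + 2` vertices of `{1,...,N}` whose last two vertices are
`u` and `v`. -/
def BluePathEnding (N : ℕ) (χ : Finset ℕ → Bool) (l u v : ℕ) : Prop :=
  ∃ x : ℕ → ℕ, StrictMono x ∧ (∀ i < l + 2, x i ∈ Finset.Icc 1 N) ∧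
    (∀ j, j + 3 ≤ l + 2 → χ {x j, x (j + 1), x (j + 2)} = false) ∧ x l = u ∧ x (l + 1) = v

lemma bluePathEnding_zero {N : ℕ} {χ : Finset ℕ → Bool} {u v : ℕ} (hu : u ∈ Finset.Icc 1 N)
    (hv : v ∈ Finset.Icc 1 N) (huv : u < v) : BluePathEnding N χ 0 u v := by
  refine ⟨fun i => if i = 0 then u else v + (i - 1), ?_, ?_, ?_, by simp, by simp⟩
  · apply strictMono_nat_of_lt_succ
    intro i
    rcases i with _ | i
    · simpa using huv
    · simp
  · intro i hi
    have : i = 0 ∨ i = 1 := by omega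
    rcases this with rfl | rfl
    · simpa using hu
    · simpa using hv
  · intro j hj
    omega

lemma BluePathEnding.extend {N : ℕ} {χ : Finset ℕ → Bool} {l u v w : ℕ}
    (h : BluePathEnding N χ l u v) (hw : w ∈ Finset.Icc 1 N) (hvw : v < w)
    (hb : χ {u, v, w} = false) : BluePathEnding N χ (l + 1) v w := by
  obtain ⟨x, hx, hr, hc, rfl, rfl⟩ := h
  have hlo : ∀ i, i < l + 2 → (if i < l + 2 then x i else w + (i - (l + 2))) = x i :=
    fun i hi => if_pos hi
  have hhi : (if l + 2 < l + 2 then x (l + 2) else w + (l + 2 - (l + 2))) = w := by simp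
  refine ⟨fun i => if i < l + 2 then x i else w + (i - (l + 2)), ?_, ?_, ?_,
    hlo _ (by omega), hhi⟩
  · apply strictMono_nat_of_lt_succ
    intro i
    have h1 := hx (show i < i + 1 by omega)
    split_ifs with h2 h3
    · exact h1
    · obtain rfl : i = l + 1 := by omega
      omega
    · omega
    · omega
  · intro i hi
    dsimp only
    rcases Nat.lt_or_ge i (l + 2) with h2 | h2
    · rw [hlo i h2]
      exact hr i h2
    · obtain rfl : i = l + 2 := by omega
      rw [hhi]
      exact hw
  · intro j hj
    dsimp only
    rcases Nat.lt_or_ge j l with h2 | h2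
    · rw [hlo j (by omega), hlo (j + 1) (by omega), hlo (j + 2) (by omega)]
      exact hc j (by omega)
    · obtain rfl : j = l := by omega
      rw [hlo j (by omega), hlo (j + 1) (by omega), hhi]
      exact hb

lemma exists_spread_or_path (n : ℕ) :
    ∃ N, ∀ χ : Finset ℕ → Bool, HasRedSpread 3 4 3 N χ ∨ HasBlueTightPath 3 n N χ := by
  classical
  obtain ⟨N, hN⟩ := exists_mono_four (n + 1)
  refine ⟨N, fun χ => ?_⟩
  by_cases hlong : ∃ u v, BluePathEnding N χ n u v
  · obtain ⟨u, v, x, hx, hr, hc, -, -⟩ := hlong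
    refine Or.inr ⟨x, hx, fun i hi => hr i (by omega), fun j hj => ?_⟩
    rw [image_range_three]
    exact hc j (by omega)
  left
  push Not at hlong
  obtain ⟨S, hSA, hS4, y, hy⟩ := hN
    (fun u v => Nat.findGreatest (fun l => BluePathEnding N χ l u v) n) (Finset.Icc 1 N)
    (fun u _ v _ _ => Nat.lt_succ_of_le (Nat.findGreatest_le n)) (by simp)
  refine ⟨S, hSA, hS4, ?_⟩
  rw [Finset.filter_true_of_mem, Finset.card_powersetCard, hS4]
  · decide
  intro e he
  rw [Finset.mem_powersetCard] at he
  obtain ⟨u, v, w, huv, hvw, rfl⟩ := exists_sorted_three he.2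
  have hu : u ∈ S := he.1 (by simp)
  have hv : v ∈ S := he.1 (by simp)
  have hw : w ∈ S := he.1 (by simp)
  by_contra hblue
  rw [Bool.not_eq_true] at hblue
  have h1 := hy u hu v hv huv
  have h2 := hy v hv w hw hvw
  have hB : BluePathEnding N χ y u v := by
    rw [← h1]
    exact Nat.findGreatest_spec (P := fun l => BluePathEnding N χ l u v) (Nat.zero_le n)
      (bluePathEnding_zero (hSA hu) (hSA hv) huv)
  have hyn : y ≤ n := h1 ▸ Nat.findGreatest_le n
  have hyne : y ≠ n := fun h => hlong u v (h ▸ hB)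
  have h3 := Nat.le_findGreatest (P := fun l => BluePathEnding N χ l v w)
    (show y + 1 ≤ n by omega) (hB.extend (hSA hw) hvw hblue)
  omega

/-- For every integer `n ≥ 3`, `r_3(4, 3; P_n) ≥ 2n − 2`: there is a
red/blue coloring of the 3-element subsets of `{1,...,2n−3}` containing no blue ordered
3-uniform tight path on `n` vertices and no set of 4 vertices spanning at least 3 red
triples. -/
theorem stmt_10 :
    ∀ n : ℕ, 3 ≤ n →
      2 * n - 2 ≤ spreadPathRamsey 3 4 3 n ∧
      ∃ χ : Finset ℕ → Bool,
        ¬ HasBlueTightPath 3 n (2 * n - 3) χ ∧ ¬ HasRedSpread 3 4 3 (2 * n - 3) χ := by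
  intro n hn
  refine ⟨?_, pairColoring, not_hasBlueTightPath_pairColoring hn,
    not_hasRedSpread_pairColoring _⟩
  apply le_csInf (exists_spread_or_path n)
  intro N hN
  by_contra hlt
  rcases hN pairColoring with h | ⟨x, hx, hr, hb⟩
  · exact not_hasRedSpread_pairColoring N h
  · refine not_hasBlueTightPath_pairColoring hn ⟨x, hx, fun i hi => ?_, hb⟩
    have := hr i hi
    rw [Finset.mem_Icc] at this ⊢
    omega
end

section
/- For every integer n ≥ 3, r_3(4, 3; P_n) ≤ 3n − 4: every red/blue coloring of the 3-element subsets of {1,...,3n−4} contains a blue ordered copy of the 3-uniform tight path on n vertices or a set of 4 vertices spanning at least 3 red triples. -/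
/-- Some blue tight path on `j + 2` vertices of `{1, ..., N}` starts with the pair `u, v`
(where `u < v ≤ N` is left to the context). -/
def Long (N : ℕ) (χ : Finset ℕ → Bool) : ℕ → ℕ → ℕ → Prop
  | 0, _, _ => True
  | j + 1, u, v => ∃ w, v < w ∧ w ≤ N ∧ χ {u, v, w} = false ∧ Long N χ j v w

lemma Long.mono {N : ℕ} {χ : Finset ℕ → Bool} {j u v : ℕ} (h : Long N χ (j + 1) u v) :
    Long N χ j u v := by
  induction j generalizing u v with
  | zero => trivial
  | succ j ih =>
    obtain ⟨w, h1, h2, h3, h4⟩ := h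
    exact ⟨w, h1, h2, h3, ih h4⟩

/-- No four vertices of `{1, ..., N}` span three red triples, spelled out as: any two red triples
among four vertices leave the other two blue. -/
def Sparse (N : ℕ) (χ : Finset ℕ → Bool) : Prop :=
  ∀ a b c d, 1 ≤ a → a < b → b < c → c < d → d ≤ N →
    ¬(χ {a, b, c} = true ∧ χ {a, b, d} = true ∧ χ {a, c, d} = true) ∧
    ¬(χ {a, b, c} = true ∧ χ {a, b, d} = true ∧ χ {b, c, d} = true) ∧
    ¬(χ {a, b, c} = true ∧ χ {a, c, d} = true ∧ χ {b, c, d} = true) ∧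
    ¬(χ {a, b, d} = true ∧ χ {a, c, d} = true ∧ χ {b, c, d} = true)

lemma hasRedSpread_of_three {N : ℕ} {χ : Finset ℕ → Bool} {S e f g : Finset ℕ}
    (hS : S ⊆ Finset.Icc 1 N) (hc : S.card = 4)
    (he : e ⊆ S ∧ e.card = 3) (hf : f ⊆ S ∧ f.card = 3) (hg : g ⊆ S ∧ g.card = 3)
    (hef : e ≠ f) (heg : e ≠ g) (hfg : f ≠ g)
    (h : χ e = true ∧ χ f = true ∧ χ g = true) : HasRedSpread 3 4 3 N χ := by
  refine ⟨S, hS, hc, ?_⟩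
  have h3 : ({e, f, g} : Finset (Finset ℕ)).card = 3 := Finset.card_eq_three.2
    ⟨e, f, g, hef, heg, hfg, rfl⟩
  rw [← h3]
  apply Finset.card_le_card
  intro t ht
  simp only [Finset.mem_insert, Finset.mem_singleton] at ht
  rcases ht with rfl | rfl | rfl <;> simp [Finset.mem_powersetCard, *]

lemma sparse_of_not_hasRedSpread {N : ℕ} {χ : Finset ℕ → Bool}
    (h : ¬ HasRedSpread 3 4 3 N χ) : Sparse N χ := by
  intro a b c d ha hab hbc hcd hd
  have hS : ({a, b, c, d} : Finset ℕ) ⊆ Finset.Icc 1 N := by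
    intro t ht
    simp only [Finset.mem_insert, Finset.mem_singleton] at ht
    rw [Finset.mem_Icc]
    omega
  have hc : ({a, b, c, d} : Finset ℕ).card = 4 := by
    rw [Finset.card_insert_of_notMem, Finset.card_insert_of_notMem,
      Finset.card_insert_of_notMem, Finset.card_singleton] <;>
    simp only [Finset.mem_insert, Finset.mem_singleton] <;> omega
  have c3 : ∀ x y z : ℕ, x < y → y < z → ({x, y, z} : Finset ℕ).card = 3 := fun x y z h1 h2 =>
    Finset.card_eq_three.2 ⟨x, y, z, by omega, by omega, by omega, rfl⟩
  have e1 : ({a, b, c} : Finset ℕ) ⊆ {a, b, c, d} ∧ ({a, b, c} : Finset ℕ).card = 3 :=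
    ⟨by intro t; simp; tauto, c3 _ _ _ hab hbc⟩
  have e2 : ({a, b, d} : Finset ℕ) ⊆ {a, b, c, d} ∧ ({a, b, d} : Finset ℕ).card = 3 :=
    ⟨by intro t; simp; tauto, c3 _ _ _ hab (by omega)⟩
  have e3 : ({a, c, d} : Finset ℕ) ⊆ {a, b, c, d} ∧ ({a, c, d} : Finset ℕ).card = 3 :=
    ⟨by intro t; simp; tauto, c3 _ _ _ (by omega) hcd⟩
  have e4 : ({b, c, d} : Finset ℕ) ⊆ {a, b, c, d} ∧ ({b, c, d} : Finset ℕ).card = 3 :=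
    ⟨by intro t; simp; tauto, c3 _ _ _ hbc hcd⟩
  -- Two of the triples differ because a vertex omitted by one lies in the other.
  have ne : ∀ (t : ℕ) (e f : Finset ℕ), t ∈ e → t ∉ f → e ≠ f := by
    rintro t e _ h1 h2 rfl
    exact h2 h1
  have n12 : ({a, b, c} : Finset ℕ) ≠ {a, b, d} := ne c _ _ (by simp) (by simp; omega)
  have n13 : ({a, b, c} : Finset ℕ) ≠ {a, c, d} := ne b _ _ (by simp) (by simp; omega)
  have n14 : ({a, b, c} : Finset ℕ) ≠ {b, c, d} := ne a _ _ (by simp) (by simp; omega)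
  have n23 : ({a, b, d} : Finset ℕ) ≠ {a, c, d} := ne b _ _ (by simp) (by simp; omega)
  have n24 : ({a, b, d} : Finset ℕ) ≠ {b, c, d} := ne a _ _ (by simp) (by simp; omega)
  have n34 : ({a, c, d} : Finset ℕ) ≠ {b, c, d} := ne a _ _ (by simp) (by simp; omega)
  exact ⟨fun k => h (hasRedSpread_of_three hS hc e1 e2 e3 n12 n13 n23 k),
    fun k => h (hasRedSpread_of_three hS hc e1 e2 e4 n12 n14 n24 k),
    fun k => h (hasRedSpread_of_three hS hc e1 e3 e4 n13 n14 n34 k),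
    fun k => h (hasRedSpread_of_three hS hc e2 e3 e4 n23 n24 n34 k)⟩

/-- The `j`-short pairs contain no triangle followed by at least `3j - 1` vertices
(truncated subtraction: no vertices are required for `j = 0`). -/
def TriangleFree (N : ℕ) (χ : Finset ℕ → Bool) (j : ℕ) : Prop :=
  ∀ u v w, 1 ≤ u → u < v → v < w → w + (3 * j - 1) ≤ N →
    Long N χ j u v ∨ Long N χ j u w ∨ Long N χ j v w

section
variable {N : ℕ} {χ : Finset ℕ → Bool}

/-- A vertex `w` cannot form `j`-short pairs with three later vertices: these would have long
mutual pairs, so all three triples through `w` would be red. -/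
lemma not_three_short (hs : Sparse N χ) {j : ℕ} (hT : TriangleFree N χ j) {w x y z : ℕ}
    (hw : 1 ≤ w) (hx : w < x) (hy : x < y) (hz : y < z) (hN : z + (3 * j - 1) ≤ N)
    (sx : ¬ Long N χ j w x) (sy : ¬ Long N χ j w y) (sz : ¬ Long N χ j w z) : False := by
  have key : ∀ p q, w < p → p < q → q ≤ z → ¬ Long N χ j w p → ¬ Long N χ j w q →
      χ {w, p, q} = true := by
    intro p q h1 h2 h3 sp sq
    have hl : Long N χ j p q := by
      rcases hT w p q hw h1 h2 (by omega) with h | h | h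
      exacts [absurd h sp, absurd h sq, h]
    by_contra hr
    have hl' : Long N χ (j + 1) w p := ⟨q, h2, by omega, by simpa using hr, hl⟩
    exact sp hl'.mono
  exact (hs w x y z hw hx hy hz (by omega)).1
    ⟨key x y hx hy hz.le sx sy, key x z hx (by omega) le_rfl sx sz,
      key y z (by omega) hz le_rfl sy sz⟩

/-- A short pair stays short, one level down, along a blue triple. -/
lemma short_of_blue {j u v w : ℕ} (h : ¬ Long N χ (j + 1) u v) (hvw : v < w) (hw : w ≤ N)
    (hb : χ {u, v, w} = false) : ¬ Long N χ j v w :=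
  fun hl => h ⟨w, hvw, hw, hb, hl⟩

/-- If `uv` and `uw` are `(j+2)`-short, then `vw` cannot form red triples with both ends of a
pair `q < r` that is not `j`-short. -/
lemma not_red_red (hs : Sparse N χ) {j u v w q r : ℕ} (hu : 1 ≤ u) (huv : u < v)
    (hvw : v < w) (hwq : w < q) (hqr : q < r) (hr : r ≤ N)
    (suv : ¬ Long N χ (j + 2) u v) (suw : ¬ Long N χ (j + 2) u w)
    (rq : χ {v, w, q} = true) (rr : χ {v, w, r} = true) : ¬ Long N χ j q r := by
  intro hl
  have h := hs v w q r (by omega) hvw hwq hqr hr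
  have b1 : χ {v, q, r} = false := by simpa using fun k => h.1 ⟨rq, rr, k⟩
  have b2 : χ {w, q, r} = false := by simpa using fun k => h.2.1 ⟨rq, rr, k⟩
  have l1 : Long N χ (j + 1) v q := ⟨r, hqr, hr, b1, hl⟩
  have l2 : Long N χ (j + 1) w q := ⟨r, hqr, hr, b2, hl⟩
  have r1 : χ {u, v, q} = true := by
    by_contra k
    exact suv ⟨q, by omega, by omega, by simpa using k, l1⟩
  have r2 : χ {u, w, q} = true := by
    by_contra k
    exact suw ⟨q, by omega, by omega, by simpa using k, l2⟩
  exact (hs u v w q hu huv hvw hwq (by omega)).2.2.2 ⟨r1, r2, rq⟩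

/-- Two colors on five points repeat one color three times. -/
lemma exists_three_eq (f : Fin 5 → Bool) :
    ∃ i j k : Fin 5, i < j ∧ j < k ∧ f i = f j ∧ f j = f k := by
  revert f
  decide

lemma triangleFree_step (hs : Sparse N χ) {j : ℕ} (h0 : TriangleFree N χ j)
    (h1 : TriangleFree N χ (j + 1)) : TriangleFree N χ (j + 2) := by
  intro u v w hu huv hvw hN
  by_contra hcon
  push Not at hcon
  obtain ⟨suv, suw, svw⟩ := hcon
  by_cases hred : χ {u, v, w} = true
  · have key : ∀ x, w < x → x ≤ N → ¬ Long N χ (j + 1) w x := by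
      intro x hx hxN
      by_cases hb : χ {u, w, x} = true
      · have hb' : χ {v, w, x} = false := by
          simpa using fun k => (hs u v w x hu huv hvw hx hxN).2.2.1 ⟨hred, hb, k⟩
        exact short_of_blue svw hx hxN hb'
      · exact short_of_blue suw hx hxN (by simpa using hb)
    exact not_three_short hs h1 (x := w + 1) (y := w + 2) (z := w + 3) (by omega) (by omega)
      (by omega) (by omega) (by omega) (key _ (by omega) (by omega)) (key _ (by omega) (by omega))
      (key _ (by omega) (by omega))
  · have svw' : ¬ Long N χ (j + 1) v w :=
      short_of_blue suv hvw (by omega) (by simpa using hred)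
    have blue3 : ∀ x y z, w < x → x < y → y < z → z ≤ w + 5 → χ {v, w, x} = false →
        χ {v, w, y} = false → χ {v, w, z} = false → False := by
      intro x y z hx hy hz hz5 bx bY bz
      exact not_three_short hs h0 (by omega) hx hy hz (by omega)
        (short_of_blue svw' hx (by omega) bx) (short_of_blue svw' (by omega) (by omega) bY)
        (short_of_blue svw' (by omega) (by omega) bz)
    have red3 : ∀ x y z, w < x → x < y → y < z → z ≤ w + 5 → χ {v, w, x} = true →
        χ {v, w, y} = true → χ {v, w, z} = true → False := by
      intro x y z hx hy hz hz5 rx ry rz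
      rcases h0 x y z (by omega) hy hz (by omega) with h | h | h
      · exact not_red_red hs hu huv hvw hx hy (by omega) suv suw rx ry h
      · exact not_red_red hs hu huv hvw hx (by omega) (by omega) suv suw rx rz h
      · exact not_red_red hs hu huv hvw (by omega) hz (by omega) suv suw ry rz h
    obtain ⟨a, b, c, hab, hbc, e1, e2⟩ := exists_three_eq fun i => χ {v, w, w + 1 + i}
    cases hc : χ {v, w, w + 1 + c}
    · exact blue3 (w + 1 + a) (w + 1 + b) (w + 1 + c) (by omega) (by omega) (by omega) (by omega)
        (e1.trans (e2.trans hc)) (e2.trans hc) hc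
    · exact red3 (w + 1 + a) (w + 1 + b) (w + 1 + c) (by omega) (by omega) (by omega) (by omega)
        (e1.trans (e2.trans hc)) (e2.trans hc) hc

/-- With a single vertex `x` after `w`, the triples `uvx`, `uwx`, `vwx` are not all red. -/
lemma triangleFree_one (hs : Sparse N χ) : TriangleFree N χ 1 := by
  intro u v w hu huv hvw hN
  by_contra hcon
  push Not at hcon
  obtain ⟨suv, suw, svw⟩ := hcon
  have red : ∀ p q, q ≤ w → ¬ Long N χ 1 p q → χ {p, q, w + 1} = true := by
    intro p q hq hp
    by_contra k
    exact hp ⟨w + 1, by omega, by omega, by simpa using k, trivial⟩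
  exact (hs u v w (w + 1) hu huv hvw (by omega) (by omega)).2.2.2
    ⟨red _ _ hvw.le suv, red _ _ le_rfl suw, red _ _ le_rfl svw⟩

lemma exists_long (hs : Sparse N χ) (j : ℕ) : TriangleFree N χ j := by
  have h : TriangleFree N χ j ∧ TriangleFree N χ (j + 1) := by
    induction j with
    | zero => exact ⟨fun _ _ _ _ _ _ _ => Or.inl trivial, triangleFree_one hs⟩
    | succ j ih => exact ⟨ih.2, triangleFree_step hs ih.1 ih.2⟩
  exact h.1

lemma Long.exists_seq {j u v : ℕ} (h : Long N χ j u v) (huv : u < v) (hv : v ≤ N) :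
    ∃ x : ℕ → ℕ, StrictMono x ∧ x 0 = u ∧ x 1 = v ∧ (∀ i < j + 2, x i ≤ N) ∧
      ∀ i < j, χ {x i, x (i + 1), x (i + 2)} = false := by
  induction j generalizing u v with
  | zero =>
    -- Beyond the last vertex of the path the sequence is continued arbitrarily.
    refine ⟨fun i => if i = 0 then u else v + (i - 1), strictMono_nat_of_lt_succ ?_, by simp,
      by simp, ?_, by simp⟩
    · intro i
      rcases i with _ | i <;> simp [huv]
    · intro i hi
      have : i = 0 ∨ i = 1 := by omega
      rcases this with rfl | rfl <;> simp <;> omega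
  | succ j ih =>
    obtain ⟨w, hvw, hw, hb, hl⟩ := h
    obtain ⟨x, hx, x0, x1, hxN, hxb⟩ := ih hl hvw hw
    refine ⟨fun i => Nat.casesOn i u x, strictMono_nat_of_lt_succ ?_, rfl, x0, ?_, ?_⟩
    · rintro (_ | i)
      · simpa [x0] using huv
      · exact hx (Nat.lt_succ_self i)
    · rintro (_ | i) hi
      · exact (huv.trans_le hv).le
      · exact hxN i (by omega)
    · rintro (_ | i) hi
      · simpa [x0, x1] using hb
      · exact hxb i (by omega)

end

lemma path_or_spread (n : ℕ) (hn : 3 ≤ n) (χ : Finset ℕ → Bool) :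
    HasBlueTightPath 3 n (3 * n - 4) χ ∨ HasRedSpread 3 4 3 (3 * n - 4) χ := by
  by_cases hr : HasRedSpread 3 4 3 (3 * n - 4) χ
  · exact Or.inr hr
  left
  have hs := sparse_of_not_hasRedSpread hr
  have fin : ∀ u v, 1 ≤ u → u < v → v ≤ 3 * n - 4 → Long (3 * n - 4) χ (n - 2) u v →
      HasBlueTightPath 3 n (3 * n - 4) χ := by
    intro u v hu huv hv hl
    obtain ⟨x, hx, x0, -, hxN, hxb⟩ := hl.exists_seq huv hv
    refine ⟨x, hx, fun i hi => Finset.mem_Icc.2 ⟨?_, hxN i (by omega)⟩, fun i hi => ?_⟩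
    · have := hx.monotone (Nat.zero_le i)
      omega
    · have : ((Finset.range 3).image fun k => x (i + k)) = {x i, x (i + 1), x (i + 2)} := by
        ext t
        simp [Finset.range_add_one]
        tauto
      rw [this]
      exact hxb i (by omega)
  rcases exists_long hs (n - 2) 1 2 3 (by omega) (by omega) (by omega) (by omega) with h | h | h
  · exact fin 1 2 (by omega) (by omega) (by omega) h
  · exact fin 1 3 (by omega) (by omega) (by omega) h
  · exact fin 2 3 (by omega) (by omega) (by omega) h

/-- For every integer `n ≥ 3`, `r_3(4, 3; P_n) ≤ 3n − 4`: every
red/blue coloring of the 3-element subsets of `{1,...,3n−4}` contains a blue ordered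
3-uniform tight path on `n` vertices or a set of 4 vertices spanning at least 3 red
triples. -/
theorem stmt_11 :
    ∀ n : ℕ, 3 ≤ n →
      spreadPathRamsey 3 4 3 n ≤ 3 * n - 4 ∧
      ∀ χ : Finset ℕ → Bool,
        HasBlueTightPath 3 n (3 * n - 4) χ ∨ HasRedSpread 3 4 3 (3 * n - 4) χ := by
  intro n hn
  exact ⟨Nat.sInf_le fun χ => (path_or_spread n hn χ).symm, path_or_spread n hn⟩
end

section
/- For every integer n ≥ 3, r_3(4, 3; P_n) ≤ r_3(4, 3; B_{n−1,2}) − 1, where P_n is the 3-uniform tight path on n vertices and B_{n−1,2} is the ordered 3-uniform broom. -/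
theorem image_window (v : ℕ → ℕ) (j : ℕ) :
    ((Finset.range 3).image fun i => v (j + i)) = {v j, v (j + 1), v (j + 2)} := by
  ext t
  simp [Finset.range_add_one]
  tauto

/-- A blue tight path on `k + 2` vertices followed by a blue triple on its last two vertices and a
new larger vertex `z` is a blue tight path on `k + 3` vertices. -/
theorem extend_path {χ : Finset ℕ → Bool} {v : ℕ → ℕ} {k z : ℕ} (hv : StrictMono v)
    (hb : ∀ j, j + 3 ≤ k + 2 → χ {v j, v (j + 1), v (j + 2)} = false)
    (hz : v (k + 1) < z) (hc : χ {v k, v (k + 1), z} = false) :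
    ∃ x : ℕ → ℕ, StrictMono x ∧ (∀ i < k + 2, x i = v i) ∧ x (k + 2) = z ∧
      ∀ j, j + 3 ≤ k + 3 → χ {x j, x (j + 1), x (j + 2)} = false := by
  have h1 : ∀ i < k + 2, (if i < k + 2 then v i else z + (i - (k + 2))) = v i :=
    fun i hi => if_pos hi
  refine ⟨fun i => if i < k + 2 then v i else z + (i - (k + 2)), ?_, h1, by simp, ?_⟩
  · apply strictMono_nat_of_lt_succ
    intro i
    rcases lt_trichotomy i (k + 1) with h | h | h
    · simp only [h1 i (by omega), h1 (i + 1) (by omega)]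
      exact hv (Nat.lt_succ_self i)
    · subst h
      simpa using hz
    · rw [if_neg (by omega), if_neg (by omega)]
      omega
  · intro j hj
    rcases Nat.lt_or_ge j k with h | h
    · simp only [h1 j (by omega), h1 (j + 1) (by omega), h1 (j + 2) (by omega)]
      exact hb j (by omega)
    · obtain rfl : j = k := by omega
      simpa using hc

/-- Some blue tight path on `k + 2` vertices, all at least `1`, ends in the vertices `x, y`. -/
def EndsPath (χ : Finset ℕ → Bool) (k x y : ℕ) : Prop :=
  ∃ v : ℕ → ℕ, StrictMono v ∧ 1 ≤ v 0 ∧ v k = x ∧ v (k + 1) = y ∧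
    ∀ j, j + 3 ≤ k + 2 → χ {v j, v (j + 1), v (j + 2)} = false

theorem endsPath_zero (χ : Finset ℕ → Bool) {x y : ℕ} (hx : 1 ≤ x) (hxy : x < y) :
    EndsPath χ 0 x y := by
  refine ⟨fun i => if i = 0 then x else y + (i - 1), ?_, by simpa using hx, by simp, by simp,
    fun j hj => by omega⟩
  apply strictMono_nat_of_lt_succ
  intro i
  rcases Nat.eq_zero_or_pos i with h | h
  · subst h; simpa using hxy
  · rw [if_neg (by omega), if_neg (by omega)]
    omega

theorem EndsPath.extend {χ : Finset ℕ → Bool} {k x y z : ℕ} (h : EndsPath χ k x y) (hyz : y < z)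
    (hc : χ {x, y, z} = false) : EndsPath χ (k + 1) y z := by
  obtain ⟨v, hv, h0, rfl, rfl, hb⟩ := h
  obtain ⟨u, hu, hui, huz, hub⟩ := extend_path hv hb hyz hc
  exact ⟨u, hu, by rwa [hui 0 (by omega)], hui _ (by omega), huz, fun j hj => hub j (by omega)⟩

/-- Two distinct blue extensions of a pair ending a blue path on `k + 2` vertices give a blue
broom `B_{k+2,2}`. -/
theorem EndsPath.broom {χ : Finset ℕ → Bool} {k x y z z' N : ℕ} (h : EndsPath χ k x y)
    (hyz : y < z) (hzz : z < z') (hN : z' ≤ N)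
    (hc : χ {x, y, z} = false) (hc' : χ {x, y, z'} = false) : HasBlueBroom 3 (k + 2) 2 N χ := by
  obtain ⟨v, hv, h0, rfl, rfl, hb⟩ := h
  have hle : ∀ i < k + 2, v i ≤ v (k + 1) := fun i hi => hv.monotone (by omega)
  refine ⟨v, fun j => if j = 0 then z else z' + (j - 1), hv, ?_, ?_, ?_, ?_, ?_, ?_⟩
  · apply strictMono_nat_of_lt_succ
    intro i
    rcases Nat.eq_zero_or_pos i with h | h
    · subst h; simpa using hzz
    · rw [if_neg (by omega), if_neg (by omega)]
      omega
  · intro i hi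
    have := hle i hi
    have := hv.monotone (Nat.zero_le i)
    rw [Finset.mem_Icc]
    omega
  · intro j hj
    rw [Finset.mem_Icc]
    dsimp only
    split_ifs <;> omega
  · intro i hi j hj
    have := hle i hi
    dsimp only
    split_ifs <;> omega
  · intro j hj
    rw [image_window]
    exact hb j hj
  · intro _ j hj
    have himg : ((Finset.range (3 - 1)).image fun i => v (k + 2 - (3 - 1) + i))
        = {v k, v (k + 1)} := by
      ext t
      simp [Finset.range_add_one]
      tauto
    have hins : ∀ t, insert t ({v k, v (k + 1)} : Finset ℕ) = {v k, v (k + 1), t} := by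
      intro t
      ext s
      simp
      tauto
    simp only [himg, hins]
    have : j = 0 ∨ j = 1 := by omega
    rcases this with rfl | rfl
    · simpa using hc
    · simpa using hc'

/-- Finite end-homogeneity: if pairs receive colors below `q`, every sufficiently large set of
naturals contains `L` elements such that the color of a pair depends only on its smaller element. -/
theorem exists_endHomogeneous_s13 (q L : ℕ) :
    ∃ N, ∀ (c : ℕ → ℕ → ℕ) (S : Finset ℕ), (∀ x y, c x y < q) → N ≤ S.card →
      ∃ T ⊆ S, T.card = L ∧ ∃ g : ℕ → ℕ, ∀ x ∈ T, ∀ y ∈ T, x < y → c x y = g x := by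
  induction L with
  | zero => exact ⟨0, fun c S _ _ => ⟨∅, by simp, rfl, fun _ => 0, by simp⟩⟩
  | succ L ih =>
    obtain ⟨N, hN⟩ := ih
    refine ⟨q * N + 2, fun c S hq hS => ?_⟩
    have hne : S.Nonempty := Finset.card_pos.1 (by omega)
    set m := S.min' hne with hm
    have hmS : m ∈ S := S.min'_mem hne
    have hcard : (S.erase m).card = S.card - 1 := Finset.card_erase_of_mem hmS
    obtain ⟨col, -, hcol⟩ := Finset.exists_lt_card_fiber_of_mul_lt_card_of_maps_to
      (s := S.erase m) (t := Finset.range q) (f := c m) (n := N)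
      (fun y _ => Finset.mem_range.2 (hq m y)) (by rw [Finset.card_range]; omega)
    obtain ⟨T, hTS, hTc, g, hg⟩ := hN c _ hq hcol.le
    have hT : ∀ y ∈ T, y ∈ S ∧ m < y ∧ c m y = col := by
      intro y hy
      have h := Finset.mem_filter.1 (hTS hy)
      have h' := Finset.mem_erase.1 h.1
      exact ⟨h'.2, lt_of_le_of_ne (S.min'_le y h'.2) (Ne.symm h'.1), h.2⟩
    have hmT : m ∉ T := fun h => lt_irrefl _ (hT m h).2.1
    refine ⟨insert m T, ?_, by rw [Finset.card_insert_of_notMem hmT, hTc],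
      fun x => if x = m then col else g x, ?_⟩
    · intro y hy
      rcases Finset.mem_insert.1 hy with rfl | hy
      · exact hmS
      · exact (hT y hy).1
    · intro x hx y hy hxy
      rcases Finset.mem_insert.1 hx with rfl | hx
      · rcases Finset.mem_insert.1 hy with rfl | hy
        · exact absurd hxy (lt_irrefl _)
        · simpa using (hT y hy).2.2
      · have hmx := (hT x hx).2.1
        rcases Finset.mem_insert.1 hy with rfl | hy
        · omega
        · simp only [if_neg (show x ≠ m by omega)]
          exact hg x hx y hy hxy

theorem redSpread_of_three {χ : Finset ℕ → Bool} {N a b c d : ℕ} (ha : 1 ≤ a) (hab : a < b)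
    (hbc : b < c) (hcd : c < d) (hd : d ≤ N) (h1 : χ {a, b, c} = true)
    (h2 : χ {a, b, d} = true) (h3 : χ {a, c, d} = true) : HasRedSpread 3 4 3 N χ := by
  have card3 : ∀ x y z : ℕ, x < y → y < z → ({x, y, z} : Finset ℕ).card = 3 := by
    intro x y z hxy hyz
    exact Finset.card_eq_three.2 ⟨x, y, z, by omega, by omega, by omega, rfl⟩
  refine ⟨{a, b, c, d}, ?_, ?_, ?_⟩
  · intro t ht
    simp only [Finset.mem_insert, Finset.mem_singleton] at ht
    rw [Finset.mem_Icc]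
    omega
  · rw [Finset.card_insert_of_notMem, card3 b c d hbc hcd]
    simp only [Finset.mem_insert, Finset.mem_singleton]
    omega
  · have hR : ({{a, b, c}, {a, b, d}, {a, c, d}} : Finset (Finset ℕ)).card = 3 := by
      refine Finset.card_eq_three.2 ⟨_, _, _, ?_, ?_, ?_, rfl⟩
      · intro h
        have : d ∈ ({a, b, c} : Finset ℕ) := by rw [h]; simp
        simp only [Finset.mem_insert, Finset.mem_singleton] at this
        omega
      · intro h
        have : d ∈ ({a, b, c} : Finset ℕ) := by rw [h]; simp
        simp only [Finset.mem_insert, Finset.mem_singleton] at this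
        omega
      · intro h
        have : c ∈ ({a, b, d} : Finset ℕ) := by rw [h]; simp
        simp only [Finset.mem_insert, Finset.mem_singleton] at this
        omega
    refine hR.symm.le.trans (Finset.card_le_card ?_)
    intro e he
    simp only [Finset.mem_insert, Finset.mem_singleton] at he
    rw [Finset.mem_filter, Finset.mem_powersetCard]
    rcases he with rfl | rfl | rfl
    · exact ⟨⟨by intro t; simp; tauto, card3 _ _ _ hab hbc⟩, h1⟩
    · exact ⟨⟨by intro t; simp; tauto, card3 _ _ _ hab (by omega)⟩, h2⟩
    · exact ⟨⟨by intro t; simp; tauto, card3 _ _ _ (by omega) hcd⟩, h3⟩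

/-- Among six vertices, if each pair has at most one blue extension to the right, some 4-set spans
three red triples: discard the blue extension of the pair `y 0, y 1`, if any; of the remaining
vertices `c < d < e`, one of `d, e` does not extend `y 0, c` in blue. -/
theorem redSpread_of_six {χ : Finset ℕ → Bool} {N : ℕ} {y : Fin 6 → ℕ} (hy : StrictMono y)
    (h0 : 1 ≤ y 0) (h5 : y 5 ≤ N)
    (huniq : ∀ i j k l : Fin 6, i < j → j < k → k < l →
      χ {y i, y j, y k} = false → χ {y i, y j, y l} = true) :
    HasRedSpread 3 4 3 N χ := by
  have key : ∀ c d e : Fin 6, 1 < c → c < d → d < e →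
      χ {y 0, y 1, y c} = true → χ {y 0, y 1, y d} = true → χ {y 0, y 1, y e} = true →
      HasRedSpread 3 4 3 N χ := by
    intro c d e h1c hcd hde hc hd he
    have hle : ∀ i, y i ≤ N := fun i => (hy.monotone (Fin.le_last i)).trans h5
    cases hcol : χ {y 0, y c, y d} with
    | true =>
      exact redSpread_of_three h0 (hy (by decide)) (hy h1c) (hy hcd) (hle d) hc hd hcol
    | false =>
      exact redSpread_of_three h0 (hy (by decide)) (hy h1c) (hy (hcd.trans hde)) (hle e) hc he
        (huniq 0 c d e (lt_trans (by decide) h1c) hcd hde hcol)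
  have u : ∀ k l : Fin 6, 1 < k → k < l →
      χ {y 0, y 1, y k} = false → χ {y 0, y 1, y l} = true :=
    fun k l h1 h2 => huniq 0 1 k l (by decide) h1 h2
  cases h2 : χ {y 0, y 1, y 2} with
  | false =>
    exact key 3 4 5 (by decide) (by decide) (by decide) (u 2 3 (by decide) (by decide) h2)
      (u 2 4 (by decide) (by decide) h2) (u 2 5 (by decide) (by decide) h2)
  | true =>
    cases h3 : χ {y 0, y 1, y 3} with
    | false =>
      exact key 2 4 5 (by decide) (by decide) (by decide) h2
        (u 3 4 (by decide) (by decide) h3) (u 3 5 (by decide) (by decide) h3)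
    | true =>
      cases h4 : χ {y 0, y 1, y 4} with
      | false =>
        exact key 2 3 5 (by decide) (by decide) (by decide) h2 h3 (u 4 5 (by decide) (by decide) h4)
      | true => exact key 2 3 4 (by decide) (by decide) (by decide) h2 h3 h4

/-- Finiteness of the Ramsey number of the broom `B_{a+2,2}`. -/
theorem broom_bound_exists (a : ℕ) :
    ∃ N, ∀ χ : Finset ℕ → Bool, HasRedSpread 3 4 3 N χ ∨ HasBlueBroom 3 (a + 2) 2 N χ := by
  classical
  obtain ⟨N, hN⟩ := exists_endHomogeneous_s13 (a + 1) ((a + 1) * 5 + 1)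
  refine ⟨N, fun χ => ?_⟩
  by_cases hB : HasBlueBroom 3 (a + 2) 2 N χ
  · exact Or.inr hB
  left
  -- the longest blue path ending in the pair, measured by vertices minus two and capped at `a`
  let c : ℕ → ℕ → ℕ := fun x y => Nat.findGreatest (fun k => EndsPath χ k x y) a
  have hc : ∀ x y, c x y < a + 1 := fun x y => Nat.lt_succ_of_le (Nat.findGreatest_le a)
  obtain ⟨T, hTS, hTc, g, hg⟩ := hN c (Finset.Icc 1 N) hc (by simp)
  -- the value of `g` at the maximum of `T` is unconstrained, hence the cap by `min`
  obtain ⟨col, -, hcol⟩ := Finset.exists_lt_card_fiber_of_mul_lt_card_of_maps_to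
    (s := T) (t := Finset.range (a + 1)) (f := fun x => min (g x) a) (n := 5)
    (fun y _ => Finset.mem_range.2 (by omega)) (by rw [Finset.card_range]; omega)
  obtain ⟨U, hU, hUc⟩ := Finset.exists_subset_card_eq (Nat.succ_le_of_lt hcol)
  have hUT : ∀ x ∈ U, x ∈ T ∧ min (g x) a = col := fun x hx => Finset.mem_filter.1 (hU hx)
  have hUN : ∀ x ∈ U, 1 ≤ x ∧ x ≤ N := fun x hx => Finset.mem_Icc.1 (hTS (hUT x hx).1)
  have hmono : ∀ x ∈ U, ∀ y ∈ U, x < y → c x y = col := by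
    intro x hx y hy hxy
    have h1 := hg x (hUT x hx).1 y (hUT y hy).1 hxy
    have h2 := hc x y
    have h3 := (hUT x hx).2
    omega
  have hends : ∀ x ∈ U, ∀ y ∈ U, x < y → EndsPath χ col x y := by
    intro x hx y hy hxy
    rw [← hmono x hx y hy hxy]
    exact Nat.findGreatest_spec (P := fun k => EndsPath χ k x y) (Nat.zero_le a)
      (endsPath_zero χ (hUN x hx).1 hxy)
  let y : Fin 6 ↪o ℕ := U.orderEmbOfFin hUc
  have hyU : ∀ i, y i ∈ U := fun i => U.orderEmbOfFin_mem hUc i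
  refine redSpread_of_six y.strictMono (hUN _ (hyU 0)).1 (hUN _ (hyU 5)).2 ?_
  intro i j k l hij hjk hkl hblue
  have hij' := y.strictMono hij
  have hjk' := y.strictMono hjk
  have hkl' := y.strictMono hkl
  have hE := hends _ (hyU i) _ (hyU j) hij'
  rcases Nat.lt_or_ge col a with hlt | hge
  · -- below the cap no triple is blue
    have h1 := hE.extend hjk' hblue
    have h2 : col + 1 ≤ c (y j) (y k) := Nat.le_findGreatest hlt h1
    have h3 := hmono _ (hyU j) _ (hyU k) hjk'
    omega
  · have hcola : col = a := by
      have := (hUT _ (hyU i)).2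
      omega
    subst hcola
    rw [← Bool.not_eq_false]
    exact fun h => hB (hE.broom hjk' hkl' (hUN _ (hyU l)).2 hblue h)

/-- If every coloring of `{1,...,M+1}` has the red configuration or a blue `B_{k+2,2}`, then every
coloring of `{1,...,M}` has the red configuration or a blue `P_{k+3}`. -/
theorem path_of_broom_bound {k M : ℕ}
    (h : ∀ χ : Finset ℕ → Bool, HasRedSpread 3 4 3 (M + 1) χ ∨ HasBlueBroom 3 (k + 2) 2 (M + 1) χ)
    (χ : Finset ℕ → Bool) : HasRedSpread 3 4 3 M χ ∨ HasBlueTightPath 3 (k + 3) M χ := by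
  have hχ : ∀ e : Finset ℕ, M + 1 ∉ e → (if M + 1 ∈ e then false else χ e) = χ e :=
    fun e he => if_neg he
  rcases h fun e => if M + 1 ∈ e then false else χ e with ⟨S, hS, hSc, hSr⟩ |
    ⟨v, w, hv, hw, hvN, hwN, hvw, hpath, hbr⟩
  · left
    dsimp only at hSr
    by_cases hM : M + 1 ∈ S
    · -- the only possibly red triple of `S` is `S \ {M + 1}`
      exfalso
      have hsub : ((Finset.powersetCard 3 S).filter
          fun e => (if M + 1 ∈ e then false else χ e) = true) ⊆ {S.erase (M + 1)} := by
        intro e he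
        obtain ⟨he1, he2⟩ := Finset.mem_filter.1 he
        obtain ⟨heS, hec⟩ := Finset.mem_powersetCard.1 he1
        have hMe : M + 1 ∉ e := by
          intro hMe
          simp [hMe] at he2
        rw [Finset.mem_singleton]
        apply Finset.eq_of_subset_of_card_le
        · exact fun t ht => Finset.mem_erase.2 ⟨fun h => hMe (h ▸ ht), heS ht⟩
        · rw [Finset.card_erase_of_mem hM]
          omega
      have := Finset.card_le_card hsub
      rw [Finset.card_singleton] at this
      omega
    · refine ⟨S, ?_, hSc, ?_⟩
      · intro t ht
        have h1 := Finset.mem_Icc.1 (hS ht)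
        have h2 : t ≠ M + 1 := fun h => hM (h ▸ ht)
        rw [Finset.mem_Icc]
        omega
      · convert hSr using 2
        apply Finset.filter_congr
        intro e he
        rw [hχ e fun h => hM ((Finset.mem_powersetCard.1 he).1 h)]
  · right
    have hw0 : w 0 ≤ M := by
      have h1 := hw (Nat.zero_lt_one)
      have h2 := Finset.mem_Icc.1 (hwN 1 (by omega))
      omega
    have hvw0 : ∀ i < k + 2, v i < w 0 := fun i hi => hvw i hi 0 (by omega)
    have hv1 : ∀ i < k + 2, 1 ≤ v i := fun i hi => (Finset.mem_Icc.1 (hvN i hi)).1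
    have hlast : χ {v k, v (k + 1), w 0} = false := by
      have h1 := hbr (by omega) 0 (by omega)
      have h2 : insert (w 0) ((Finset.range (3 - 1)).image fun i => v (k + 2 - (3 - 1) + i))
          = {v k, v (k + 1), w 0} := by
        ext t
        simp [Finset.range_add_one]
        tauto
      simp only [h2] at h1
      rwa [hχ] at h1
      have := hvw0 k (by omega)
      have := hvw0 (k + 1) (by omega)
      simp only [Finset.mem_insert, Finset.mem_singleton]
      omega
    have hb : ∀ j, j + 3 ≤ k + 2 → χ {v j, v (j + 1), v (j + 2)} = false := by
      intro j hj
      have h1 := hpath j hj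
      simp only [image_window] at h1
      rwa [hχ] at h1
      have := hvw0 j (by omega)
      have := hvw0 (j + 1) (by omega)
      have := hvw0 (j + 2) (by omega)
      simp only [Finset.mem_insert, Finset.mem_singleton]
      omega
    obtain ⟨x, hx, hxv, hxw, hxb⟩ := extend_path hv hb (hvw0 _ (by omega)) hlast
    refine ⟨x, hx, fun i hi => ?_, fun j hj => ?_⟩
    · have h1 : x i ≤ x (k + 2) := hx.monotone (by omega)
      have h2 : x 0 ≤ x i := hx.monotone (Nat.zero_le i)
      have h3 := hv1 0 (by omega)
      rw [hxv 0 (by omega)] at h2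
      rw [Finset.mem_Icc]
      omega
    · rw [image_window]
      exact hxb j hj

/-- For every integer `n ≥ 3`,
`r_3(4, 3; P_n) ≤ r_3(4, 3; B_{n−1,2}) − 1`. -/
theorem stmt_13 :
    ∀ n : ℕ, 3 ≤ n →
      spreadPathRamsey 3 4 3 n ≤ spreadBroomRamsey3 (n - 1) 2 - 1 := by
  intro n hn
  obtain ⟨k, rfl⟩ : ∃ k, n = k + 3 := ⟨n - 3, by omega⟩
  have hmem := Nat.sInf_mem (s := {N | ∀ χ : Finset ℕ → Bool,
    HasRedSpread 3 4 3 N χ ∨ HasBlueBroom 3 (k + 2) 2 N χ}) (broom_bound_exists k)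
  change spreadPathRamsey 3 4 3 (k + 3) ≤ spreadBroomRamsey3 (k + 2) 2 - 1
  change spreadBroomRamsey3 (k + 2) 2 ∈ _ at hmem
  rcases hr : spreadBroomRamsey3 (k + 2) 2 with _ | M
  · -- neither configuration fits into the empty vertex set
    exfalso
    rw [hr] at hmem
    rcases hmem fun _ => true with ⟨S, hS, hSc, -⟩ | ⟨v, w, -, -, hv, -⟩
    · have := Finset.card_le_card hS
      simp at this
      simp [this] at hSc
    · simpa using hv 0 (by omega)
  · rw [hr] at hmem
    exact Nat.sInf_le (path_of_broom_bound hmem)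
end

section
/- Let n ≥ 3, k = 3, and m = r(P_n^2, P_n^2). Every red/blue coloring of the 3-element subsets of {1,...,6nm} that contains no red copy of the complete 3-uniform hypergraph on 4 vertices contains, for every a with 2 ≤ a ≤ n, a blue ordered copy of the 3-uniform broom B_{a,m} whose vertices all lie in {1,...,6am}. -/
/-! ### Finite Ramsey theorem and the Ramsey property of `powPathRamsey` -/

/-- The finite Ramsey theorem for graphs, for a relation evaluated on increasing pairs. -/
theorem exists_ramsey (s t : ℕ) : ∃ N : ℕ, ∀ (R : ℕ → ℕ → Prop) (X : Finset ℕ), N ≤ X.card →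
    (∃ C ⊆ X, C.card = s ∧ ∀ p ∈ C, ∀ q ∈ C, p < q → R p q) ∨
    (∃ C ⊆ X, C.card = t ∧ ∀ p ∈ C, ∀ q ∈ C, p < q → ¬ R p q) := by
  classical
  induction s generalizing t with
  | zero => exact ⟨0, fun R X _ => Or.inl ⟨∅, by simp, by simp, by simp⟩⟩
  | succ s ihs =>
    induction t with
    | zero => exact ⟨0, fun R X _ => Or.inr ⟨∅, by simp, by simp, by simp⟩⟩
    | succ t iht =>
      obtain ⟨N₁, h₁⟩ := ihs (t + 1)
      obtain ⟨N₂, h₂⟩ := iht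
      refine ⟨N₁ + N₂ + 1, fun R X hX => ?_⟩
      have hne : X.Nonempty := Finset.card_pos.mp (by omega)
      set v := X.min' hne with hv
      have hvX : v ∈ X := X.min'_mem hne
      have hlt : ∀ x ∈ X.erase v, v < x := fun x hx =>
        lt_of_le_of_ne (X.min'_le x (Finset.mem_of_mem_erase hx)) (Finset.ne_of_mem_erase hx).symm
      have hcard := Finset.card_filter_add_card_filter_not (s := X.erase v) (fun x => R v x)
      rw [Finset.card_erase_of_mem hvX] at hcard
      -- A clique among the neighbours of the least vertex `v` in one colour extends by `v`.
      have extend : ∀ (P : ℕ → ℕ → Prop) (C : Finset ℕ) (r : ℕ),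
          C ⊆ (X.erase v).filter (fun x => P v x) → C.card = r →
          (∀ p ∈ C, ∀ q ∈ C, p < q → P p q) →
          ∃ C ⊆ X, C.card = r + 1 ∧ ∀ p ∈ C, ∀ q ∈ C, p < q → P p q := by
        intro P C r hC hr hP
        have hCv : ∀ x ∈ C, v < x ∧ x ∈ X ∧ P v x := fun x hx => by
          have := Finset.mem_filter.mp (hC hx)
          exact ⟨hlt x this.1, Finset.mem_of_mem_erase this.1, this.2⟩
        have hvC : v ∉ C := fun h => lt_irrefl _ (hCv v h).1
        refine ⟨insert v C, ?_, by rw [Finset.card_insert_of_notMem hvC, hr], ?_⟩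
        · intro x hx
          rcases Finset.mem_insert.mp hx with hx | hx
          · rw [hx]; exact hvX
          · exact (hCv x hx).2.1
        · intro p hp q hq hpq
          rcases Finset.mem_insert.mp hp with hp | hp <;>
            rcases Finset.mem_insert.mp hq with hq | hq
          · omega
          · rw [hp]; exact (hCv q hq).2.2
          · have := (hCv p hp).1; omega
          · exact hP p hp q hq hpq
      by_cases hA : N₁ ≤ ((X.erase v).filter (fun x => R v x)).card
      · rcases h₁ R _ hA with ⟨C, hC, hc, hR⟩ | ⟨C, hC, hc, hR⟩
        · exact Or.inl (extend R C s hC hc hR)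
        · exact Or.inr ⟨C, fun x hx => Finset.mem_of_mem_erase (Finset.mem_filter.mp (hC hx)).1,
            hc, hR⟩
      · rcases h₂ R ((X.erase v).filter (fun x => ¬ R v x)) (by omega) with
          ⟨C, hC, hc, hR⟩ | ⟨C, hC, hc, hR⟩
        · exact Or.inl ⟨C, fun x hx => Finset.mem_of_mem_erase (Finset.mem_filter.mp (hC hx)).1,
            hc, hR⟩
        · exact Or.inr (extend (fun p q => ¬ R p q) C t (by convert hC) hc hR)

/-- A finite increasing sequence extends to a strictly increasing sequence on `ℕ`. -/
theorem exists_strictMono_extend (n : ℕ) (x : ℕ → ℕ) (hx : ∀ i j, i < j → j < n → x i < x j) :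
    ∃ z : ℕ → ℕ, StrictMono z ∧ ∀ i < n, z i = x i := by
  refine ⟨fun i => if i < n then x i else (∑ k ∈ Finset.range n, x k) + i + 1, ?_, ?_⟩
  · intro i j hij
    have hle : i < n → x i ≤ ∑ k ∈ Finset.range n, x k := fun h =>
      Finset.single_le_sum (f := x) (fun _ _ => Nat.zero_le _) (Finset.mem_range.mpr h)
    by_cases hj : j < n
    · have hi : i < n := by omega
      simpa [hi, hj] using hx i j hij hj
    · by_cases hi : i < n
      · have := hle hi
        simp only [hi, hj, if_true, if_false]; omega
      · simp only [hi, hj, if_false]; omega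
  · intro i hi
    simp [hi]

/-- The increasing enumeration of a finite set, as a strictly increasing sequence on `ℕ`. -/
theorem exists_enum (C : Finset ℕ) : ∃ z : ℕ → ℕ, StrictMono z ∧ ∀ i < C.card, z i ∈ C := by
  obtain ⟨z, hz, hzx⟩ := exists_strictMono_extend C.card
    (fun i => if h : i < C.card then C.orderEmbOfFin rfl ⟨i, h⟩ else 0) (by
      intro i j hij hj
      have hi : i < C.card := by omega
      simp only [hi, hj, dif_pos]
      exact (C.orderEmbOfFin rfl).strictMono (by simpa using hij))
  refine ⟨z, hz, fun i hi => ?_⟩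
  rw [hzx i hi]
  simp only [hi, dif_pos]
  exact C.orderEmbOfFin_mem rfl _

theorem powPathRamsey_mem (n : ℕ) : ∀ χ : Finset ℕ → Bool,
    HasPowPath 2 n (powPathRamsey 2 n n) true χ ∨
      HasPowPath 2 n (powPathRamsey 2 n n) false χ := by
  have hne : {N | ∀ χ : Finset ℕ → Bool,
      HasPowPath 2 n N true χ ∨ HasPowPath 2 n N false χ}.Nonempty := by
    obtain ⟨N, hN⟩ := exists_ramsey n n
    refine ⟨N, fun χ => ?_⟩
    have key : ∀ (b : Bool) (C : Finset ℕ), C ⊆ Finset.Icc 1 N → C.card = n →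
        (∀ p ∈ C, ∀ q ∈ C, p < q → χ {p, q} = b) → HasPowPath 2 n N b χ := by
      intro b C hC hc hR
      obtain ⟨z, hz, hzC⟩ := exists_enum C
      rw [hc] at hzC
      exact ⟨z, hz, fun i hi => hC (hzC i hi), fun i j hij hj _ =>
        hR _ (hzC i (by omega)) _ (hzC j hj) (hz hij)⟩
    rcases hN (fun p q => χ {p, q} = true) (Finset.Icc 1 N) (by simp) with
      ⟨C, hC, hc, hR⟩ | ⟨C, hC, hc, hR⟩
    · exact Or.inl (key true C hC hc hR)
    · exact Or.inr (key false C hC hc fun p hp q hq hpq => by simpa using hR p hp q hq hpq)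
  exact Nat.sInf_mem hne

theorem powPathRamsey_pos (n : ℕ) (hn : 3 ≤ n) : 1 ≤ powPathRamsey 2 n n := by
  rcases powPathRamsey_mem n (fun _ => true) with ⟨x, _, hx, _⟩ | ⟨x, _, hx, _⟩ <;>
  · have := Finset.mem_Icc.mp (hx 0 (by omega))
    omega

/-- The Ramsey property of `powPathRamsey 2 n n`, transported to an arbitrary vertex set `W`. -/
theorem ramsey_on_set (n : ℕ) (W : Finset ℕ) (hW : W.card = powPathRamsey 2 n n)
    (R : ℕ → ℕ → Prop) : ∃ x : ℕ → ℕ, StrictMono x ∧ (∀ i < n, x i ∈ W) ∧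
      ((∀ i j, i < j → j < n → j - i ≤ 2 → R (x i) (x j)) ∨
       (∀ i j, i < j → j < n → j - i ≤ 2 → ¬ R (x i) (x j))) := by
  classical
  obtain ⟨e, he, heW⟩ := exists_enum W
  rw [hW] at heW
  have uniq : ∀ p q p' q' : ℕ, p < q → p' < q' → ({p, q} : Finset ℕ) = {p', q'} →
      p = p' ∧ q = q' := by
    intro p q p' q' h h' heq
    have h1 : p ∈ ({p', q'} : Finset ℕ) := heq ▸ (by simp)
    have h2 : q ∈ ({p', q'} : Finset ℕ) := heq ▸ (by simp)
    simp only [Finset.mem_insert, Finset.mem_singleton] at h1 h2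
    omega
  -- The vertex `p ∈ {1,...,m}` stands for the `p`-th element `e (p - 1)` of `W`.
  let ψ : Finset ℕ → Bool := fun T =>
    decide (∃ p q, p < q ∧ T = {p, q} ∧ R (e (p - 1)) (e (q - 1)))
  have hψ : ∀ p q, p < q → (ψ {p, q} = true ↔ R (e (p - 1)) (e (q - 1))) := by
    intro p q hpq
    simp only [ψ, decide_eq_true_eq]
    constructor
    · rintro ⟨p', q', h', heq, hR⟩
      obtain ⟨rfl, rfl⟩ := uniq p q p' q' hpq h' heq
      exact hR
    · exact fun hR => ⟨p, q, hpq, rfl, hR⟩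
  have key : ∀ y : ℕ → ℕ, StrictMono y → (∀ i < n, y i ∈ Finset.Icc 1 (powPathRamsey 2 n n)) →
      ∃ x : ℕ → ℕ, StrictMono x ∧ (∀ i < n, x i ∈ W) ∧ ∀ i < n, x i = e (y i - 1) := by
    intro y hy hmem
    obtain ⟨x, hx, hxe⟩ := exists_strictMono_extend n (fun i => e (y i - 1)) (by
      intro i j hij hj
      have h1 := Finset.mem_Icc.mp (hmem i (by omega))
      have h2 := hy hij
      exact he (by omega))
    refine ⟨x, hx, fun i hi => ?_, hxe⟩
    have h1 := Finset.mem_Icc.mp (hmem i hi)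
    rw [hxe i hi]
    exact heW _ (by omega)
  rcases powPathRamsey_mem n ψ with ⟨y, hy, hmem, hc⟩ | ⟨y, hy, hmem, hc⟩
  · obtain ⟨x, hx, hxW, hxe⟩ := key y hy hmem
    refine ⟨x, hx, hxW, Or.inl fun i j hij hj hd => ?_⟩
    rw [hxe i (by omega), hxe j hj]
    exact (hψ _ _ (hy hij)).mp (hc i j hij hj hd)
  · obtain ⟨x, hx, hxW, hxe⟩ := key y hy hmem
    refine ⟨x, hx, hxW, Or.inr fun i j hij hj hd hR => ?_⟩
    rw [hxe i (by omega), hxe j hj] at hR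
    have h1 := (hψ _ _ (hy hij)).mpr hR
    rw [hc i j hij hj hd] at h1
    exact absurd h1 (by simp)

/-! ### Blue tight paths ending in a given pair -/

/-- `L χ k u v`: some blue tight path on `k + 2` positive vertices ends with the pair `u < v`. -/
def L (χ : Finset ℕ → Bool) : ℕ → ℕ → ℕ → Prop
  | 0, u, v => 1 ≤ u ∧ u < v
  | k + 1, v, w => v < w ∧ ∃ u, L χ k u v ∧ χ {u, v, w} = false

theorem L.lt {χ : Finset ℕ → Bool} {k u v : ℕ} (h : L χ k u v) : u < v := by
  cases k with
  | zero => exact h.2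
  | succ k => exact h.1

theorem L.pos {χ : Finset ℕ → Bool} {k u v : ℕ} (h : L χ k u v) : 1 ≤ u := by
  cases k with
  | zero => exact h.1
  | succ k =>
    obtain ⟨_, t, ht, _⟩ := h
    have := ht.lt
    omega

theorem L.pred {χ : Finset ℕ → Bool} {k : ℕ} : ∀ {u v : ℕ}, L χ (k + 1) u v → L χ k u v := by
  induction k with
  | zero => exact fun h => ⟨h.pos, h.lt⟩
  | succ k ih => exact fun ⟨hlt, t, ht, hb⟩ => ⟨hlt, t, ih ht, hb⟩

theorem L.mono {χ : Finset ℕ → Bool} {k l u v : ℕ} (h : L χ l u v) (hkl : k ≤ l) : L χ k u v := by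
  induction l, hkl using Nat.le_induction with
  | base => exact h
  | succ l _ ih => exact ih h.pred

theorem L.step {χ : Finset ℕ → Bool} {k u v w : ℕ} (h : L χ k u v) (hvw : v < w)
    (hb : χ {u, v, w} = false) : L χ (k + 1) v w :=
  ⟨hvw, u, h, hb⟩

theorem L_of_path {χ : Finset ℕ → Bool} {n : ℕ} {x : ℕ → ℕ} (hx : StrictMono x) (h0 : 1 ≤ x 0)
    (hb : ∀ i, i + 2 < n → χ {x i, x (i + 1), x (i + 2)} = false) (k : ℕ) (hk : k + 1 < n) :
    L χ k (x k) (x (k + 1)) := by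
  induction k with
  | zero => exact ⟨h0, hx (by omega)⟩
  | succ k ih => exact (ih (by omega)).step (hx (by omega)) (hb k hk)

theorem L.exists_path {χ : Finset ℕ → Bool} {k : ℕ} : ∀ {u v : ℕ}, L χ k u v →
    ∃ p : ℕ → ℕ, (∀ i j, i < j → j < k + 2 → p i < p j) ∧ (∀ i < k + 2, 1 ≤ p i) ∧
      p k = u ∧ p (k + 1) = v ∧
      ∀ i, i + 2 < k + 2 → χ {p i, p (i + 1), p (i + 2)} = false := by
  induction k with
  | zero =>
    intro u v h
    have h1 := h.pos
    have h2 := h.lt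
    refine ⟨fun i => if i = 0 then u else v, ?_, ?_, by simp, by simp, by omega⟩
    · intro i j hij hj
      obtain rfl : i = 0 := by omega
      obtain rfl : j = 1 := by omega
      simpa using h2
    · intro i _
      by_cases hi : i = 0 <;> simp [hi] <;> omega
  | succ k ih =>
    rintro v w ⟨hvw, u, hu, hb⟩
    obtain ⟨p, hmono, hpos, hpu, hpv, hblue⟩ := ih hu
    have hle : ∀ i < k + 2, p i ≤ v := fun i hi => by
      by_cases h : i = k + 1
      · rw [h, hpv]
      · rw [← hpv]; exact (hmono i (k + 1) (by omega) (by omega)).le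
    refine ⟨fun i => if i < k + 2 then p i else w, ?_, ?_, ?_, ?_, ?_⟩
    · intro i j hij hj
      have hi : i < k + 2 := by omega
      by_cases hj' : j < k + 2
      · simpa [hi, hj'] using hmono i j hij hj'
      · have := hle i hi
        simp only [hi, hj', if_true, if_false]; omega
    · intro i _
      by_cases hi : i < k + 2
      · simpa [hi] using hpos i hi
      · have := hu.pos
        have := hu.lt
        simp only [hi, if_false]; omega
    · simpa using hpv
    · simp
    · intro i hi
      by_cases hi' : i + 2 < k + 2
      · have h1 : i < k + 2 := by omega
        have h2 : i + 1 < k + 2 := by omega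
        simpa only [h1, h2, hi', if_true] using hblue i hi'
      · obtain rfl : i = k := by omega
        simpa [hpu, hpv] using hb

/-- Without a blue broom `B_{A+2,m}`, a pair ending a blue tight path on `A + 2` vertices has
fewer than `m` blue extensions to the right. -/
theorem top_ext_lt {χ : Finset ℕ → Bool} {A m N : ℕ} (hm1 : 1 ≤ m)
    (hB : ¬ HasBlueBroom 3 (A + 2) m N χ) {u v : ℕ} (huv : L χ A u v) (X : Finset ℕ)
    (hX : ∀ x ∈ X, v < x ∧ x ≤ N ∧ χ {u, v, x} = false) : X.card < m := by
  by_contra! hm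
  apply hB
  obtain ⟨p, hmono, hpos, hpu, hpv, hblue⟩ := huv.exists_path
  obtain ⟨q, hq, hqp⟩ := exists_strictMono_extend (A + 2) p hmono
  obtain ⟨w, hw, hwX⟩ := exists_enum X
  have hle : ∀ i < A + 2, q i ≤ v := fun i hi => by
    rw [← hpv, ← hqp (A + 1) (by omega)]
    exact hq.monotone (by omega)
  have hvN : v ≤ N := by
    have := hX _ (hwX 0 (by omega))
    omega
  refine ⟨q, w, hq, hw, ?_, ?_, ?_, ?_, ?_⟩
  · intro i hi
    have h1 := hpos i hi
    rw [← hqp i hi] at h1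
    exact Finset.mem_Icc.mpr ⟨h1, (hle i hi).trans hvN⟩
  · intro j hj
    have h1 := hX _ (hwX j (by omega))
    exact Finset.mem_Icc.mpr ⟨by omega, h1.2.1⟩
  · intro i hi j hj
    have h1 := hX _ (hwX j (by omega))
    have := hle i hi
    omega
  · intro j hj
    have h1 := hblue j (by omega)
    rw [← hqp j (by omega), ← hqp (j + 1) (by omega), ← hqp (j + 2) (by omega)] at h1
    rw [← h1]
    congr 1
    ext z
    simp [Finset.range_add_one]
    tauto
  · intro _ j hj
    have h1 := (hX _ (hwX j (by omega))).2.2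
    rw [← hpu, ← hpv, ← hqp A (by omega), ← hqp (A + 1) (by omega)] at h1
    rw [← h1]
    congr 1
    ext z
    simp [Finset.range_add_one]
    tauto

/-! ### Red `K_4` and the two kinds of steps -/

theorem not_red_four {χ : Finset ℕ → Bool} {N : ℕ} (hR : ¬ HasRedClique 3 4 N χ) {t u v w : ℕ}
    (ht : 1 ≤ t) (htu : t < u) (huv : u < v) (hvw : v < w) (hw : w ≤ N)
    (h1 : χ {t, u, v} = true) (h2 : χ {t, u, w} = true) (h3 : χ {t, v, w} = true)
    (h4 : χ {u, v, w} = true) : False := by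
  apply hR
  have hcard : ({t, u, v, w} : Finset ℕ).card = 4 := by
    rw [Finset.card_insert_of_notMem, Finset.card_insert_of_notMem,
      Finset.card_insert_of_notMem, Finset.card_singleton] <;> simp <;> omega
  refine ⟨{t, u, v, w}, ?_, hcard, ?_⟩
  · intro z hz
    simp only [Finset.mem_insert, Finset.mem_singleton] at hz
    rw [Finset.mem_Icc]; omega
  · intro e he hc
    obtain ⟨z, hz, hze⟩ := Finset.exists_mem_notMem_of_card_lt_card (s := e)
      (t := {t, u, v, w}) (by omega)
    have heq : e = ({t, u, v, w} : Finset ℕ).erase z := by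
      apply Finset.eq_of_subset_of_card_le
      · intro y hy
        exact Finset.mem_erase.mpr ⟨fun h => hze (h ▸ hy), he hy⟩
      · rw [Finset.card_erase_of_mem hz]; omega
    rw [heq]
    simp only [Finset.mem_insert, Finset.mem_singleton] at hz
    rcases hz with rfl | rfl | rfl | rfl
    · rw [← h4]; congr 1; ext y
      simp only [Finset.mem_erase, Finset.mem_insert, Finset.mem_singleton]; omega
    · rw [← h3]; congr 1; ext y
      simp only [Finset.mem_erase, Finset.mem_insert, Finset.mem_singleton]; omega
    · rw [← h2]; congr 1; ext y
      simp only [Finset.mem_erase, Finset.mem_insert, Finset.mem_singleton]; omega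
    · rw [← h1]; congr 1; ext y
      simp only [Finset.mem_erase, Finset.mem_insert, Finset.mem_singleton]; omega

/-- Every subset of `S` with at least `2m` elements contains `m` points `y` that satisfy `L j w y`
for one common vertex `w`. -/
def StarLevel (χ : Finset ℕ → Bool) (m j : ℕ) (S : Finset ℕ) : Prop :=
  ∀ Y ⊆ S, 2 * m ≤ Y.card → ∃ w, ∃ W ⊆ Y, W.card = m ∧ ∀ y ∈ W, L χ j w y

/-- A monochromatic `P_n^2` in `W`, for the colouring of pairs by `L (j+1)`, either yields a top
pair in `W` or consists of pairs with `L (j+1)` and has a red consecutive triple. -/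
theorem top_or_red_triple {χ : Finset ℕ → Bool} {N n A j w : ℕ} (hR : ¬ HasRedClique 3 4 N χ)
    (hA : A + 2 ≤ n) (W : Finset ℕ) (hW : W.card = powPathRamsey 2 n n)
    (hWN : ∀ y ∈ W, y ≤ N) (hw : ∀ y ∈ W, L χ j w y) :
    (∃ u ∈ W, ∃ v ∈ W, L χ A u v) ∨
    ∃ x ∈ W, ∃ y ∈ W, ∃ z ∈ W, L χ (j + 1) x y ∧ L χ (j + 1) x z ∧ L χ (j + 1) y z ∧
      χ {x, y, z} = true := by
  obtain ⟨x, hx, hxW, hc⟩ := ramsey_on_set n W hW (L χ (j + 1))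
  by_cases hb : ∀ i, i + 2 < n → χ {x i, x (i + 1), x (i + 2)} = false
  · refine Or.inl ⟨x A, hxW _ (by omega), x (A + 1), hxW _ (by omega), ?_⟩
    have h0 := hw _ (hxW 0 (by omega))
    exact L_of_path hx (by have := h0.pos; have := h0.lt; omega) hb A (by omega)
  · push Not at hb
    obtain ⟨i, hi, hred⟩ := hb
    have hred' : χ {x i, x (i + 1), x (i + 2)} = true := by simpa using hred
    rcases hc with hc | hc
    · exact Or.inr ⟨_, hxW i (by omega), _, hxW (i + 1) (by omega), _, hxW (i + 2) (by omega),
        hc _ _ (by omega) (by omega) (by omega), hc _ _ (by omega) (by omega) (by omega),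
        hc _ _ (by omega) (by omega) (by omega), hred'⟩
    · exfalso
      -- Pairs of the path extend `w` only by red triples.
      have red : ∀ p q, p < q → q < n → q - p ≤ 2 → χ {w, x p, x q} = true := by
        intro p q hpq hq hd
        by_contra h
        exact hc p q hpq hq hd ((hw _ (hxW p (by omega))).step (hx hpq) (by simpa using h))
      have h0 := hw _ (hxW i (by omega))
      exact not_red_four hR h0.pos h0.lt (hx (by omega : i < i + 1))
        (hx (by omega : i + 1 < i + 2)) (hWN _ (hxW _ (by omega)))
        (red _ _ (by omega) (by omega) (by omega)) (red _ _ (by omega) (by omega) (by omega))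
        (red _ _ (by omega) (by omega) (by omega)) hred'

/-- If `W` has no top pair, and its points satisfy `L j w` for a common vertex `w`, then beyond `W`
the star level is `j + 1`. -/
theorem star_step {χ : Finset ℕ → Bool} {N n A j w : ℕ} (hR : ¬ HasRedClique 3 4 N χ)
    (hA : A + 2 ≤ n) (W : Finset ℕ)
    (hW : W.card = powPathRamsey 2 n n) (hWN : ∀ y ∈ W, y ≤ N) (hw : ∀ y ∈ W, L χ j w y)
    (hclean : ∀ u ∈ W, ∀ v ∈ W, ¬ L χ A u v) (S : Finset ℕ) (hS : ∀ s ∈ S, s ≤ N)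
    (hWS : ∀ y ∈ W, ∀ s ∈ S, y < s) : StarLevel χ (powPathRamsey 2 n n) (j + 1) S := by
  classical
  intro Y hY hYc
  rcases top_or_red_triple hR hA W hW hWN hw with
    ⟨u, hu, v, hv, h⟩ | ⟨x, hx, y, hy, z, hz, hxy, hxz, hyz, hred⟩
  · exact absurd h (hclean u hu v hv)
  by_contra hno
  have few : ∀ t, (Y.filter fun s => L χ (j + 1) t s).card < powPathRamsey 2 n n := by
    intro t
    by_contra! h
    obtain ⟨W', hW', hc'⟩ := Finset.exists_subset_card_eq h
    exact hno ⟨t, W', fun s hs => (Finset.mem_filter.mp (hW' hs)).1, hc',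
      fun s hs => (Finset.mem_filter.mp (hW' hs)).2⟩
  have hun := Finset.card_union_le (Y.filter fun s => L χ (j + 1) y s)
    (Y.filter fun s => L χ (j + 1) z s)
  have f1 := few y
  have f2 := few z
  obtain ⟨s, hsY, hs⟩ := Finset.exists_mem_notMem_of_card_lt_card
    (s := (Y.filter fun s => L χ (j + 1) y s) ∪ (Y.filter fun s => L χ (j + 1) z s))
    (t := Y) (by omega)
  have hsy : ¬ L χ (j + 1) y s := fun h =>
    hs (Finset.mem_union_left _ (Finset.mem_filter.mpr ⟨hsY, h⟩))
  have hsz : ¬ L χ (j + 1) z s := fun h =>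
    hs (Finset.mem_union_right _ (Finset.mem_filter.mpr ⟨hsY, h⟩))
  have red : ∀ p q, L χ (j + 1) p q → q < s → ¬ L χ (j + 1) q s → χ {p, q, s} = true := by
    intro p q hpq hqs hn
    by_contra h
    exact hn (hpq.step hqs (by simpa using h)).pred
  have hys := hWS y hy s (hY hsY)
  have hzs := hWS z hz s (hY hsY)
  exact not_red_four hR hxy.pos hxy.lt hyz.lt hzs (hS s (hY hsY)) hred (red _ _ hxy hys hsy)
    (red _ _ hxz hzs hsz) (red _ _ hyz hzs hsz)

/-- Let `u < v` be a top pair to the left of `S`, all of whose pairs with `S` satisfy `L c`.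
Outside the fewer than `m` blue extensions of `u, v`, all pairs of `S` satisfy `L (c+1)`. -/
theorem floor_step {χ : Finset ℕ → Bool} {N A m c : ℕ} (hm : 1 ≤ m) (hR : ¬ HasRedClique 3 4 N χ)
    (hB : ¬ HasBlueBroom 3 (A + 2) m N χ) {u v : ℕ} (huv : L χ A u v) (S : Finset ℕ)
    (hS : ∀ s ∈ S, s ≤ N) (hvS : ∀ s ∈ S, v < s) (hu : ∀ s ∈ S, L χ c u s)
    (hv : ∀ s ∈ S, L χ c v s) :
    ∃ S' ⊆ S, S.card ≤ S'.card + m ∧ ∀ y ∈ S', ∀ y' ∈ S', y < y' → L χ (c + 1) y y' := by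
  classical
  refine ⟨S.filter fun s => ¬ χ {u, v, s} = false, Finset.filter_subset _ _, ?_, ?_⟩
  · have h1 := Finset.card_filter_add_card_filter_not (s := S) (fun s => χ {u, v, s} = false)
    have h2 := top_ext_lt hm hB huv (S.filter fun s => χ {u, v, s} = false) (by
      intro s hs
      obtain ⟨hs1, hs2⟩ := Finset.mem_filter.mp hs
      exact ⟨hvS s hs1, hS s hs1, hs2⟩)
    omega
  · intro y hy y' hy' hlt
    obtain ⟨hyS, hyr⟩ := Finset.mem_filter.mp hy
    obtain ⟨hyS', hyr'⟩ := Finset.mem_filter.mp hy'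
    by_contra hno
    exact not_red_four hR huv.pos huv.lt (hvS y hyS) hlt (hS y' hyS') (by simpa using hyr)
      (by simpa using hyr')
      (by by_contra h; exact hno ((hu y hyS).step hlt (by simpa using h)))
      (by by_contra h; exact hno ((hv y hyS).step hlt (by simpa using h)))

theorem exists_least (S : Finset ℕ) (hS : 1 ≤ S.card) :
    ∃ y ∈ S, ∃ T ⊆ S, T.card + 1 = S.card ∧ ∀ t ∈ T, y < t := by
  classical
  have hne : S.Nonempty := Finset.card_pos.mp hS
  refine ⟨S.min' hne, S.min'_mem hne, S.erase (S.min' hne), Finset.erase_subset _ _, ?_, ?_⟩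
  · rw [Finset.card_erase_of_mem (S.min'_mem hne)]; omega
  · intro t ht
    exact lt_of_le_of_ne (S.min'_le t (Finset.mem_of_mem_erase ht)) (Finset.ne_of_mem_erase ht).symm

/-- If all pairs of `S` are top, then `S` has at most `3m` elements: otherwise four vertices of `S`
spanning a red `K_4` can be chosen greedily. -/
theorem card_le_of_all_top {χ : Finset ℕ → Bool} {N A m : ℕ} (hm : 1 ≤ m)
    (hR : ¬ HasRedClique 3 4 N χ) (hB : ¬ HasBlueBroom 3 (A + 2) m N χ) (S : Finset ℕ)
    (hS : ∀ s ∈ S, s ≤ N) (htop : ∀ y ∈ S, ∀ y' ∈ S, y < y' → L χ A y y') : S.card ≤ 3 * m := by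
  classical
  by_contra! hbig
  have few : ∀ p ∈ S, ∀ q ∈ S, p < q → ∀ T ⊆ S, (∀ t ∈ T, q < t) →
      (T.filter fun s => χ {p, q, s} = false).card < m := by
    intro p hp q hq hpq T hT hqT
    exact top_ext_lt hm hB (htop p hp q hq hpq) _ (fun s hs => by
      obtain ⟨h1, h2⟩ := Finset.mem_filter.mp hs
      exact ⟨hqT s h1, hS s (hT h1), h2⟩)
  obtain ⟨y1, hy1, T1, hT1, hc1, hl1⟩ := exists_least S (by omega)
  obtain ⟨y2, hy2, T2, hT2, hc2, hl2⟩ := exists_least T1 (by omega)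
  have h12 := few y1 hy1 y2 (hT1 hy2) (hl1 y2 hy2) T2 (hT2.trans hT1) hl2
  have hsum := Finset.card_filter_add_card_filter_not (s := T2) (fun s => χ {y1, y2, s} = false)
  obtain ⟨y3, hy3, T3, hT3, hc3, hl3⟩ :=
    exists_least (T2.filter fun s => ¬ χ {y1, y2, s} = false) (by omega)
  obtain ⟨hy3T, hr3⟩ := Finset.mem_filter.mp hy3
  have hT3S : T3 ⊆ S := fun s hs => hT1 (hT2 (Finset.mem_filter.mp (hT3 hs)).1)
  have hy3S : y3 ∈ S := hT1 (hT2 hy3T)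
  have h13 := few y1 hy1 y3 hy3S (hl1 y3 (hT2 hy3T)) T3 hT3S hl3
  have h23 := few y2 (hT1 hy2) y3 hy3S (hl2 y3 hy3T) T3 hT3S hl3
  have hun := Finset.card_union_le (T3.filter fun s => χ {y1, y3, s} = false)
    (T3.filter fun s => χ {y2, y3, s} = false)
  obtain ⟨y4, hy4, hn4⟩ := Finset.exists_mem_notMem_of_card_lt_card
    (s := (T3.filter fun s => χ {y1, y3, s} = false) ∪ (T3.filter fun s => χ {y2, y3, s} = false))
    (t := T3) (by omega)
  have hr4 := (Finset.mem_filter.mp (hT3 hy4)).2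
  exact not_red_four hR (htop y1 hy1 y2 (hT1 hy2) (hl1 y2 hy2)).pos (hl1 y2 hy2) (hl2 y3 hy3T)
    (hl3 y4 hy4) (hS y4 (hT3S hy4)) (by simpa using hr3) (by simpa using hr4)
    (by
      by_contra h
      exact hn4 (Finset.mem_union_left _ (Finset.mem_filter.mpr ⟨hy4, by simpa using h⟩)))
    (by
      by_contra h
      exact hn4 (Finset.mem_union_right _ (Finset.mem_filter.mpr ⟨hy4, by simpa using h⟩)))

/-! ### The iteration -/

theorem exists_initial_segment (S : Finset ℕ) (k : ℕ) (hk : k ≤ S.card) :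
    ∃ Y ⊆ S, ∃ T ⊆ S, Y.card = k ∧ T.card + k = S.card ∧ ∀ y ∈ Y, ∀ t ∈ T, y < t := by
  classical
  induction k with
  | zero => exact ⟨∅, by simp, S, subset_rfl, by simp, by simp, by simp⟩
  | succ k ih =>
    obtain ⟨Y, hY, T, hT, hYc, hTc, hlt⟩ := ih (by omega)
    obtain ⟨v, hv, T', hTT, hc, hl⟩ := exists_least T (by omega)
    have hnot : v ∉ Y := fun h => lt_irrefl _ (hlt _ h _ hv)
    refine ⟨insert v Y, Finset.insert_subset (hT hv) hY, T', hTT.trans hT, ?_, by omega, ?_⟩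
    · rw [Finset.card_insert_of_notMem hnot, hYc]
    · intro y hy t ht
      rcases Finset.mem_insert.mp hy with rfl | hy
      · exact hl t ht
      · exact hlt y hy t (hTT ht)

/-- The bookkeeping: raising the floor `c` to `A` costs at most `3m` vertices per step, raising the
star level `j` to `A` costs `2m` per step, and `3m + 1` vertices of floor `A` are contradictory. -/
theorem iterate {χ : Finset ℕ → Bool} {N n A : ℕ} (hR : ¬ HasRedClique 3 4 N χ)
    (hA : A + 2 ≤ n) (hm : 1 ≤ powPathRamsey 2 n n)
    (hB : ¬ HasBlueBroom 3 (A + 2) (powPathRamsey 2 n n) N χ) (d : ℕ) :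
    ∀ (i l c j : ℕ) (S : Finset ℕ), i + l = d → c + i = A → j + l = A → (∀ s ∈ S, s ≤ N) →
      (∀ y ∈ S, ∀ y' ∈ S, y < y' → L χ c y y') → StarLevel χ (powPathRamsey 2 n n) j S →
      S.card ≤ 3 * powPathRamsey 2 n n * i + 2 * powPathRamsey 2 n n * l
        + 3 * powPathRamsey 2 n n := by
  induction d with
  | zero =>
    intro i l c j S hd hc hj hS hfl _
    obtain ⟨rfl, rfl⟩ : i = 0 ∧ l = 0 := by omega
    obtain rfl : c = A := by omega
    simpa using card_le_of_all_top hm hR hB S hS hfl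
  | succ d ih =>
    intro i l c j S hd hc hj hS hfl hst
    set m := powPathRamsey 2 n n with hmdef
    by_contra! hbig
    rcases i with _ | i
    · obtain rfl : c = A := by omega
      have := card_le_of_all_top hm hR hB S hS hfl
      have : 0 ≤ 2 * m * l := Nat.zero_le _
      omega
    have e1 : 3 * m * (i + 1) = 3 * m * i + 3 * m := by ring
    obtain ⟨Y, hY, T, hT, hYc, hTc, hlt⟩ := exists_initial_segment S (2 * m) (by omega)
    obtain ⟨w, W, hWY, hWc, hw⟩ := hst Y hY hYc.ge
    have hWN : ∀ y ∈ W, y ≤ N := fun y hy => hS y (hY (hWY hy))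
    have hWT : ∀ y ∈ W, ∀ t ∈ T, y < t := fun y hy t ht => hlt y (hWY hy) t ht
    by_cases hclean : ∀ u ∈ W, ∀ v ∈ W, ¬ L χ A u v
    · rcases l with _ | l
      · -- Here `j = A`, so `L (j+1)` implies top and `W` must contain a top pair.
        rcases top_or_red_triple hR hA W hWc hWN hw with
          ⟨u, hu, v, hv, h⟩ | ⟨x, hx, y, hy, z, hz, hxy, -, -, -⟩
        · exact hclean u hu v hv h
        · exact hclean x hx y hy (hxy.mono (by omega))
      · have := ih (i + 1) l c (j + 1) T (by omega) (by omega) (by omega)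
          (fun s hs => hS s (hT hs)) (fun y hy y' hy' => hfl y (hT hy) y' (hT hy'))
          (star_step hR hA W hWc hWN hw hclean T (fun s hs => hS s (hT hs)) hWT)
        have e2 : 2 * m * (l + 1) = 2 * m * l + 2 * m := by ring
        omega
    · push Not at hclean
      obtain ⟨u, hu, v, hv, huv⟩ := hclean
      obtain ⟨S', hS', hcard, hfl'⟩ := floor_step (c := c) hm hR hB huv T
        (fun s hs => hS s (hT hs)) (hWT v hv)
        (fun s hs => hfl u (hY (hWY hu)) s (hT hs) (hWT u hu s hs))
        (fun s hs => hfl v (hY (hWY hv)) s (hT hs) (hWT v hv s hs))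
      have := ih i l (c + 1) j S' (by omega) (by omega) hj (fun s hs => hS s (hT (hS' hs))) hfl'
        (fun Z hZ => hst Z (hZ.trans (hS'.trans hT)))
      omega

/-- Let `n ≥ 3` and `m = r(P_n^2, P_n^2)`. Every red/blue coloring of
the 3-element subsets of `{1,...,6nm}` containing no red `K_4^3` contains, for every
`a` with `2 ≤ a ≤ n`, a blue ordered copy of the 3-uniform broom `B_{a,m}` whose
vertices all lie in `{1,...,6am}`. -/
theorem stmt_15 :
    ∀ n : ℕ, 3 ≤ n →
      ∀ χ : Finset ℕ → Bool,
        ¬ HasRedClique 3 4 (6 * n * powPathRamsey 2 n n) χ →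
        ∀ a : ℕ, 2 ≤ a → a ≤ n →
          HasBlueBroom 3 a (powPathRamsey 2 n n) (6 * a * powPathRamsey 2 n n) χ := by
  intro n hn χ hR a ha han
  have hm := powPathRamsey_pos n hn
  obtain ⟨A, rfl⟩ : ∃ A, a = A + 2 := ⟨a - 2, by omega⟩
  by_contra hB
  have hle : 6 * (A + 2) * powPathRamsey 2 n n ≤ 6 * n * powPathRamsey 2 n n :=
    Nat.mul_le_mul_right _ (by omega)
  have hR' : ¬ HasRedClique 3 4 (6 * (A + 2) * powPathRamsey 2 n n) χ := by
    rintro ⟨S, hS, h⟩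
    exact hR ⟨S, hS.trans (Finset.Icc_subset_Icc_right hle), h⟩
  -- Star level `0` beyond the vertex `1` is witnessed by `w = 1`.
  have key := iterate hR' han hm hB (A + A) A A 0 0
    (Finset.Icc 2 (6 * (A + 2) * powPathRamsey 2 n n)) rfl (by omega) (by omega)
    (fun s hs => (Finset.mem_Icc.mp hs).2)
    (fun y hy y' _ hlt => ⟨by have := (Finset.mem_Icc.mp hy).1; omega, hlt⟩)
    (by
      intro Y hY hYc
      obtain ⟨W, hW, hWc⟩ := Finset.exists_subset_card_eq
        (show powPathRamsey 2 n n ≤ Y.card by omega)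
      exact ⟨1, W, hW, hWc, fun y hy =>
        ⟨le_rfl, by have := (Finset.mem_Icc.mp (hY (hW hy))).1; omega⟩⟩)
  rw [Nat.card_Icc] at key
  nlinarith [Nat.zero_le (A * powPathRamsey 2 n n),
    Nat.sub_add_cancel (show 2 ≤ 6 * (A + 2) * powPathRamsey 2 n n + 1 by nlinarith)]
end

section
/- Let n > k ≥ 3. Every red/blue coloring of the k-element subsets of {1,...,2n^2} with the property that no set S of k+1 vertices spans at least 3 red k-element subsets one of which consists of the k smallest vertices of S, contains, for every a with 1 ≤ a ≤ n − 1, a blue ordered copy of the k-uniform broom B_{a,n} whose vertices all lie in {1,...,2an}. -/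
/-- A blue broom of uniformity `K + 2` inside `{1,...,N}` with path `v 0 < ⋯ < v (a-1)` and with
the leaves given as a finite set `L` rather than as an increasing sequence. -/
def LeafBroom (K a N : ℕ) (χ : Finset ℕ → Bool) (v : ℕ → ℕ) (L : Finset ℕ) : Prop :=
  StrictMono v ∧ (∀ i < a, v i ∈ Finset.Icc 1 N) ∧ L ⊆ Finset.Icc 1 N ∧
    (∀ i < a, ∀ x ∈ L, v i < x) ∧
    (∀ j, j + (K + 2) ≤ a → χ ((Finset.range (K + 2)).image fun i => v (j + i)) = false) ∧
    (K + 1 ≤ a → ∀ x ∈ L,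
      χ (insert x ((Finset.range (K + 1)).image fun i => v (a - (K + 1) + i))) = false)

/-- The first `L.card` values enumerate `L`; the others only serve to make the sequence total. -/
lemma exists_strictMono_enum (L : Finset ℕ) :
    ∃ w : ℕ → ℕ, StrictMono w ∧ ∀ j < L.card, w j ∈ L := by
  refine ⟨fun j => if h : j < L.card then L.orderEmbOfFin rfl ⟨j, h⟩ else L.sup id + 1 + j,
    ?_, ?_⟩
  · intro i j hij
    by_cases hj : j < L.card
    · have hi : i < L.card := hij.trans hj
      simp only [hi, hj, dif_pos]
      exact (L.orderEmbOfFin rfl).strictMono hij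
    · by_cases hi : i < L.card
      · simp only [hi, hj, dif_pos, dif_neg, not_false_eq_true]
        have h := Finset.le_sup (f := id) (L.orderEmbOfFin_mem rfl ⟨i, hi⟩)
        simp only [id] at h
        omega
      · simp only [hi, hj, dif_neg, not_false_eq_true]
        omega
  · intro j hj
    simp only [hj, dif_pos]
    exact L.orderEmbOfFin_mem rfl _

lemma LeafBroom.hasBlueBroom {K a N m : ℕ} {χ : Finset ℕ → Bool} {v : ℕ → ℕ} {L : Finset ℕ}
    (h : LeafBroom K a N χ v L) (hm : m ≤ L.card) : HasBlueBroom (K + 2) a m N χ := by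
  obtain ⟨hv, hvN, hL, hlt, hpath, hleaf⟩ := h
  obtain ⟨w, hw, hwL⟩ := exists_strictMono_enum L
  exact ⟨v, w, hv, hw, hvN, fun j hj => hL (hwL j (hj.trans_le hm)),
    fun i hi j hj => hlt i hi _ (hwL j (hj.trans_le hm)), hpath,
    fun ha j hj => hleaf ha _ (hwL j (hj.trans_le hm))⟩

/-- A leaf `u` becomes the last path vertex; the new leaves `L'` have to be blue with `u` and the
last `K` old path vertices. -/
lemma LeafBroom.extend {K s M N u : ℕ} {χ : Finset ℕ → Bool} {v : ℕ → ℕ} {L L' : Finset ℕ}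
    (h : LeafBroom K (K + s) M χ v L) (hMN : M ≤ N) (hu : u ∈ L)
    (hL' : L' ⊆ Finset.Icc 1 N)
    (hblue : ∀ x ∈ L', u < x ∧
      χ (insert x (insert u ((Finset.range K).image fun i => v (s + i)))) = false) :
    ∃ v', LeafBroom K (K + (s + 1)) N χ v' L' := by
  obtain ⟨hv, hvN, hL, hlt, hpath, hleaf⟩ := h
  have huM := Finset.mem_Icc.1 (hL hu)
  have hold : ∀ i, i < K + s → (if i < K + s then v i else u + (i - (K + s))) = v i :=
    fun i hi => if_pos hi
  have hlast : (if K + s < K + s then v (K + s) else u + (K + s - (K + s))) = u := by simp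
  refine ⟨fun i => if i < K + s then v i else u + (i - (K + s)), ?_, ?_, hL', ?_, ?_, ?_⟩
  · intro i j hij
    dsimp only
    by_cases hi : i < K + s <;> by_cases hj : j < K + s
    · rw [if_pos hi, if_pos hj]; exact hv hij
    · rw [if_pos hi, if_neg hj]; have := hlt i hi u hu; omega
    · omega
    · rw [if_neg hi, if_neg hj]; omega
  · intro i hi
    rw [Finset.mem_Icc]
    dsimp only
    by_cases hi' : i < K + s
    · rw [if_pos hi']; have := Finset.mem_Icc.1 (hvN i hi'); omega
    · rw [if_neg hi']; omega
  · intro i hi x hx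
    have hux := (hblue x hx).1
    dsimp only
    by_cases hi' : i < K + s
    · rw [if_pos hi']; exact (hlt i hi' u hu).trans hux
    · rw [if_neg hi']; omega
  · intro j hj
    by_cases hj' : j + (K + 2) ≤ K + s
    · rw [← hpath j hj']
      congr 1
      refine Finset.image_congr fun i hi => ?_
      have hi := Finset.mem_range.1 hi
      exact hold _ (by omega)
    · -- The last window consists of the old last `K + 1` path vertices and the old leaf `u`.
      have hjs : j + (K + 1) = K + s := by omega
      rw [Finset.range_add_one, Finset.image_insert]
      dsimp only
      rw [hjs, hlast, ← hleaf (by omega) u hu]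
      congr 2
      refine Finset.image_congr fun i hi => ?_
      have hi := Finset.mem_range.1 hi
      rw [hold _ (by omega)]
      congr 1
      omega
  · intro _ x hx
    have hs : K + (s + 1) - (K + 1) = s := by omega
    rw [hs, Finset.range_add_one, Finset.image_insert]
    dsimp only
    rw [Nat.add_comm s K, hlast, ← (hblue x hx).2]
    congr 3
    refine Finset.image_congr fun i hi => ?_
    have hi := Finset.mem_range.1 hi
    rw [Nat.add_comm K s, if_pos (by omega)]

/-- If `T ∪ {u, y}` is red, then no later `x` is red with both `u` and `y`. -/
lemma blue_of_red_pair {K N u y x : ℕ} {χ : Finset ℕ → Bool} {T : Finset ℕ}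
    (hχ : ¬ HasRedInitialSpread (K + 2) 3 N χ) (hT : T.card = K) (hTN : T ⊆ Finset.Icc 1 N)
    (hTu : ∀ t ∈ T, t < u) (hu1 : 1 ≤ u) (huy : u < y) (hyx : y < x) (hxN : x ≤ N)
    (h1 : χ (insert y (insert u T)) = true) (h2 : χ (insert x (insert u T)) = true) :
    χ (insert x (insert y T)) = false := by
  by_contra h3
  rw [Bool.not_eq_false] at h3
  have huT : u ∉ T := fun h => lt_irrefl _ (hTu u h)
  have hyT : y ∉ T := fun h => by have := hTu y h; omega
  have hxT : x ∉ T := fun h => by have := hTu x h; omega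
  have hyu : y ∉ insert u T := by simp [hyT, huy.ne']
  have hxu : x ∉ insert u T := by simp [hxT, (huy.trans hyx).ne']
  have hxy : x ∉ insert y T := by simp [hxT, hyx.ne']
  have hxyu : x ∉ insert y (insert u T) := by simp [hxT, hyx.ne', (huy.trans hyx).ne']
  apply hχ
  refine ⟨insert x (insert y (insert u T)), ?_, ?_, ⟨x, by simp, ?_, ?_⟩, ?_⟩
  · simp only [Finset.insert_subset_iff, Finset.mem_Icc]
    exact ⟨by omega, by omega, by omega, hTN⟩
  · rw [Finset.card_insert_of_notMem hxyu, Finset.card_insert_of_notMem hyu,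
      Finset.card_insert_of_notMem huT, hT]
  · intro z hz
    simp only [Finset.mem_insert] at hz
    rcases hz with rfl | rfl | rfl | hz
    · omega
    · omega
    · omega
    · have := hTu z hz; omega
  · rw [Finset.erase_insert hxyu]; exact h1
  · refine Finset.two_lt_card.2 ⟨insert y (insert u T), ?_, insert x (insert u T), ?_,
      insert x (insert y T), ?_, ?_, ?_, ?_⟩
    · simp only [Finset.mem_filter, Finset.mem_powersetCard]
      refine ⟨⟨Finset.subset_insert _ _, ?_⟩, h1⟩
      rw [Finset.card_insert_of_notMem hyu, Finset.card_insert_of_notMem huT, hT]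
    · simp only [Finset.mem_filter, Finset.mem_powersetCard]
      refine ⟨⟨Finset.insert_subset_insert _ (Finset.subset_insert _ _), ?_⟩, h2⟩
      rw [Finset.card_insert_of_notMem hxu, Finset.card_insert_of_notMem huT, hT]
    · simp only [Finset.mem_filter, Finset.mem_powersetCard]
      refine ⟨⟨Finset.insert_subset_insert _
        (Finset.insert_subset_insert _ (Finset.subset_insert _ _)), ?_⟩, h3⟩
      rw [Finset.card_insert_of_notMem hxy, Finset.card_insert_of_notMem hyT, hT]
    · intro h
      exact hxyu (h ▸ Finset.mem_insert_self _ _)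
    · intro h
      exact hxyu (h ▸ Finset.mem_insert_self _ _)
    · intro h
      have : y ∈ insert x (insert u T) := h ▸ by simp
      simp [hyT, hyx.ne, huy.ne'] at this

/-- Trading one leaf for one path vertex costs `c` new vertices, `c` being the new number of
leaves. -/
lemma LeafBroom.step {K s M c : ℕ} {χ : Finset ℕ → Bool} {v : ℕ → ℕ} {L : Finset ℕ}
    (hχ : ¬ HasRedInitialSpread (K + 2) 3 (M + c) χ)
    (h : LeafBroom K (K + s) M χ v L) (hc : c + 1 ≤ L.card) :
    ∃ v' L', c ≤ L'.card ∧ LeafBroom K (K + (s + 1)) (M + c) χ v' L' := by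
  have hext := fun u L' => LeafBroom.extend (u := u) (L' := L') h (Nat.le_add_right M c)
  obtain ⟨hv, hvN, hL, hlt, -, -⟩ := h
  set T := (Finset.range K).image fun i => v (s + i) with hTdef
  have hT : T.card = K := by
    rw [hTdef, Finset.card_image_of_injective, Finset.card_range]
    intro i j hij
    have := hv.injective hij
    omega
  have hTmem : ∀ t ∈ T, ∃ i < K + s, v i = t := by
    intro t ht
    obtain ⟨i, hi, rfl⟩ := Finset.mem_image.1 ht
    have := Finset.mem_range.1 hi
    exact ⟨s + i, by omega, rfl⟩
  have hTN : T ⊆ Finset.Icc 1 (M + c) := by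
    intro t ht
    obtain ⟨i, hi, rfl⟩ := hTmem t ht
    have := Finset.mem_Icc.1 (hvN i hi)
    exact Finset.mem_Icc.2 (by omega)
  have hLN : ∀ x ∈ L, 1 ≤ x ∧ x ≤ M := fun x hx => Finset.mem_Icc.1 (hL hx)
  have hne : L.Nonempty := Finset.card_pos.1 (by omega)
  obtain ⟨u, hu, humin⟩ : ∃ u ∈ L, ∀ x ∈ L, u ≤ x :=
    ⟨L.min' hne, L.min'_mem hne, fun x hx => L.min'_le x hx⟩
  by_cases hR : ∃ y, y ∈ L ∧ u < y ∧ χ (insert y (insert u T)) = true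
  · classical
    obtain ⟨hyL, huy, hyred⟩ := Nat.find_spec hR
    have hymin := fun z => Nat.find_min hR (m := z)
    set y := Nat.find hR
    have hbetween : ∀ x ∈ L, u < x → x < y → χ (insert x (insert u T)) = false := by
      intro x hx hux hxy
      by_contra hx'
      exact hymin x hxy ⟨hx, hux, by simpa using hx'⟩
    have huN := hLN u hu
    have hyN := hLN y hyL
    set A := L.filter fun x => u < x ∧ x < y with hA
    set B := L.filter fun x => y < x with hB
    set X := Finset.Ioc y (M + c) with hX
    set P := X.filter fun x => χ (insert x (insert u T)) = false with hP
    set Q := X.filter fun x => ¬ χ (insert x (insert u T)) = false with hQ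
    have hLcard : L.card ≤ A.card + B.card + 2 := by
      have hsub : L ⊆ (A ∪ B) ∪ {u, y} := by
        intro x hx
        have := humin x hx
        simp only [hA, hB, Finset.mem_union, Finset.mem_filter, Finset.mem_insert,
          Finset.mem_singleton, hx, true_and]
        omega
      have h1 := Finset.card_le_card hsub
      have h2 := Finset.card_union_le (A ∪ B) {u, y}
      have h3 := Finset.card_union_le A B
      have h4 : ({u, y} : Finset ℕ).card ≤ 2 := Finset.card_le_two
      omega
    have hBcard : B.card ≤ M - y := by
      rw [← Nat.card_Ioc]
      apply Finset.card_le_card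
      intro x hx
      have hx := Finset.mem_filter.1 hx
      exact Finset.mem_Ioc.2 ⟨hx.2, (hLN x hx.1).2⟩
    have hXcard : P.card + Q.card = M + c - y := by
      rw [hP, hQ, Finset.card_filter_add_card_filter_not, hX, Nat.card_Ioc]
    by_cases hPc : c ≤ A.card + P.card
    · obtain ⟨v', hv'⟩ := hext u (A ∪ P) hu
        (by
          intro x hx
          rw [Finset.mem_Icc]
          rcases Finset.mem_union.1 hx with hx | hx
          · have := hLN x (Finset.mem_filter.1 hx).1
            omega
          · have := Finset.mem_Ioc.1 (Finset.mem_filter.1 hx).1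
            omega)
        (by
          intro x hx
          rcases Finset.mem_union.1 hx with hx | hx
          · have hx := Finset.mem_filter.1 hx
            exact ⟨hx.2.1, hbetween x hx.1 hx.2.1 hx.2.2⟩
          · have hx := Finset.mem_filter.1 hx
            exact ⟨huy.trans (Finset.mem_Ioc.1 hx.1).1, hx.2⟩)
      refine ⟨v', _, ?_, hv'⟩
      rw [Finset.card_union_of_disjoint]
      · exact hPc
      · rw [Finset.disjoint_left]
        intro x hxA hxP
        have h1 := (Finset.mem_filter.1 hxA).2.2
        have h2 := (Finset.mem_Ioc.1 (Finset.mem_filter.1 hxP).1).1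
        omega
    · obtain ⟨v', hv'⟩ := hext y Q hyL
        (by
          intro x hx
          have := Finset.mem_Ioc.1 (Finset.mem_filter.1 hx).1
          rw [Finset.mem_Icc]
          omega)
        (by
          intro x hx
          have hx := Finset.mem_filter.1 hx
          have hxX := Finset.mem_Ioc.1 hx.1
          refine ⟨hxX.1, blue_of_red_pair hχ hT hTN ?_ huN.1 huy hxX.1 hxX.2 hyred
            (by simpa using hx.2)⟩
          intro t ht
          obtain ⟨i, hi, rfl⟩ := hTmem t ht
          exact hlt i hi u hu)
      exact ⟨v', _, by omega, hv'⟩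
  · push Not at hR
    obtain ⟨v', hv'⟩ := hext u (L.erase u) hu
      (by
        intro x hx
        have := hLN x (Finset.mem_of_mem_erase hx)
        rw [Finset.mem_Icc]
        omega)
      (by
        intro x hx
        have hxL := Finset.mem_of_mem_erase hx
        have hux := lt_of_le_of_ne (humin x hxL) (Finset.ne_of_mem_erase hx).symm
        exact ⟨hux, by simpa using hR x hxL hux⟩)
    refine ⟨v', _, ?_, hv'⟩
    rw [Finset.card_erase_of_mem hu]
    omega

lemma HasRedInitialSpread.mono {k t M N : ℕ} {χ : Finset ℕ → Bool} (hMN : M ≤ N)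
    (h : HasRedInitialSpread k t M χ) : HasRedInitialSpread k t N χ := by
  obtain ⟨S, hS, h⟩ := h
  exact ⟨S, hS.trans (Finset.Icc_subset_Icc_right hMN), h⟩

/-- The result of `s` applications of `LeafBroom.step` to the edgeless broom on `K` path vertices
and `c + s` leaves; the sum in the bound is `s (s + 1) / 2`. -/
lemma leafBroom_exists (K s c : ℕ) (χ : Finset ℕ → Bool)
    (hχ : ¬ HasRedInitialSpread (K + 2) 3
      (K + ∑ i ∈ Finset.range (s + 1), i + (s + 1) * c) χ) :
    ∃ v L, c ≤ L.card ∧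
      LeafBroom K (K + s) (K + ∑ i ∈ Finset.range (s + 1), i + (s + 1) * c) χ v L := by
  induction s generalizing c with
  | zero =>
    refine ⟨fun i => i + 1, Finset.Ioc K (K + c), by simp, fun i j h => by simpa using h,
      ?_, ?_, ?_, ?_, ?_⟩
    · intro i hi
      simp only [Finset.mem_Icc]
      omega
    · intro x hx
      simp only [Finset.mem_Ioc] at hx
      simp only [zero_add, Finset.range_one, Finset.sum_singleton, one_mul, Finset.mem_Icc]
      omega
    · intro i hi x hx
      simp only [Finset.mem_Ioc] at hx
      dsimp only
      omega
    · intro j hj; omega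
    · intro hj; omega
  | succ s ih =>
    have hN : K + ∑ i ∈ Finset.range (s + 1 + 1), i + (s + 1 + 1) * c =
        K + ∑ i ∈ Finset.range (s + 1), i + (s + 1) * (c + 1) + c := by
      rw [Finset.sum_range_succ _ (s + 1)]
      ring
    rw [hN] at hχ ⊢
    obtain ⟨v, L, hL, hb⟩ := ih (c + 1) fun h => hχ (h.mono (Nat.le_add_right _ _))
    exact hb.step hχ hL

lemma HasBlueBroom.mono {k a m M N : ℕ} {χ : Finset ℕ → Bool} (hMN : M ≤ N)
    (h : HasBlueBroom k a m M χ) : HasBlueBroom k a m N χ := by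
  obtain ⟨v, w, hv, hw, hvM, hwM, h⟩ := h
  have hsub := Finset.Icc_subset_Icc_right (a := 1) hMN
  exact ⟨v, w, hv, hw, fun i hi => hsub (hvM i hi), fun j hj => hsub (hwM j hj), h⟩

/-- Let `n > k ≥ 3`. Every red/blue coloring of the `k`-element
subsets of `{1,...,2n²}` with no set `S` of `k+1` vertices spanning at least 3 red
`k`-element subsets one of which consists of the `k` smallest vertices of `S` contains,
for every `a` with `1 ≤ a ≤ n − 1`, a blue ordered copy of the `k`-uniform broom
`B_{a,n}` whose vertices all lie in `{1,...,2an}`. -/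
theorem stmt_16 :
    ∀ k n : ℕ, 3 ≤ k → k < n →
      ∀ χ : Finset ℕ → Bool,
        ¬ HasRedInitialSpread k 3 (2 * n ^ 2) χ →
        ∀ a : ℕ, 1 ≤ a → a ≤ n - 1 →
          HasBlueBroom k a n (2 * a * n) χ := by
  intro k n hk hkn χ hχ a ha han
  obtain ⟨K, rfl⟩ : ∃ K, k = K + 2 := ⟨k - 2, by omega⟩
  by_cases haK : K ≤ a
  · obtain ⟨s, rfl⟩ : ∃ s, a = K + s := ⟨a - K, by omega⟩
    have hsum : (∑ i ∈ Finset.range (s + 1), i) * 2 = (s + 1) * s :=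
      Finset.sum_range_id_mul_two (s + 1)
    have hsn : s + 1 ≤ n := by omega
    have hbound : K + ∑ i ∈ Finset.range (s + 1), i + (s + 1) * n ≤ 2 * (K + s) * n := by
      have h1 : (s + 1) * s ≤ n * s := Nat.mul_le_mul_right _ hsn
      obtain ⟨J, rfl⟩ : ∃ J, K = J + 1 := ⟨K - 1, by omega⟩
      have h2 : J ≤ J * n := Nat.le_mul_of_pos_right _ (by omega)
      nlinarith
    have hle : 2 * (K + s) * n ≤ 2 * n ^ 2 := by
      have : K + s ≤ n := by omega
      nlinarith
    obtain ⟨v, L, hL, hb⟩ := leafBroom_exists K s n χ fun h => hχ (h.mono (hbound.trans hle))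
    exact (hb.hasBlueBroom hL).mono hbound
  · -- With fewer than `k - 2` path vertices a broom has no edges.
    have hN : a + n ≤ 2 * a * n := by nlinarith
    refine ⟨fun i => i + 1, fun j => a + 1 + j, fun i j h => by simpa using h,
      fun i j h => by simpa using h, ?_, ?_, ?_, ?_, ?_⟩
    · intro i hi
      simp only [Finset.mem_Icc]
      omega
    · intro j hj
      simp only [Finset.mem_Icc]
      omega
    · intro i hi j hj
      dsimp only
      omega
    · intro j hj; omega
    · intro h; omega
end
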